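/- Let A ⊆ ℝ^m be a set with 0 < |A| < +∞ (Lebesgue measure). If H^{m-1}(∂A \ ext_* A) < +∞, then there exists a sequence of smooth sets V_n ⊂⊂ A such that χ_{V_n} → χ_A in L_1(ℝ^m) and sup_n P(V_n) < +∞. -/

import Mathlib

open MeasureTheory Filter Topology Metric Set
open scoped ENNReal RealInnerProductSpace symmDiff

noncomputable section

abbrev Euc (m : ℕ) := EuclideanSpace ℝ (Fin m)

/-- Pointwise divergence of a vector field on `ℝ^m`. -/
def pdiv {m : ℕ} (φ : Euc m → Euc m) (x : Euc m) : ℝ :=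
  ∑ i, ⟪fderiv ℝ φ x (EuclideanSpace.single i 1), EuclideanSpace.single i (1 : ℝ)⟫

/-- The measure-theoretic exterior of `A`: points of Lebesgue density zero. -/
def extMeas {m : ℕ} (A : Set (Euc m)) : Set (Euc m) :=
  {x | Tendsto (fun r : ℝ => volume (A ∩ closedBall x r) / volume (closedBall x r))
      (𝓝[>] (0 : ℝ)) (𝓝 0)}

/-- The perimeter `P(V; W)` of `V` relative to the open set `W` (valued in `ℝ≥0∞`). -/
def perimeter {m : ℕ} (V W : Set (Euc m)) : ℝ≥0∞ :=
  ⨆ (φ : Euc m → Euc m) (_ : ContDiff ℝ 1 φ) (_ : HasCompactSupport φ)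
    (_ : tsupport φ ⊆ W) (_ : ∀ x, ‖φ x‖ ≤ 1),
    ENNReal.ofReal (∫ x in V, pdiv φ x)

/-- A smooth set: a bounded open set with `C^∞` boundary. -/
def IsSmoothSet {m : ℕ} (V : Set (Euc m)) : Prop :=
  IsOpen V ∧ Bornology.IsBounded V ∧
  ∀ x ∈ frontier V, ∃ (W : Set (Euc m)) (f : Euc m → ℝ), IsOpen W ∧ x ∈ W ∧
    ContDiff ℝ (⊤ : ℕ∞) f ∧ (∀ y ∈ W, fderiv ℝ f y ≠ 0) ∧ V ∩ W = {y | f y < 0} ∩ W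

/-!
Let `K = ∂A \ ext_* A` and let `A` be open of finite measure, which loses nothing since
`A \ interior A` is null. Transporting small balls along the segments from `x ∈ A` to `x + h ∉ A`
and using Lebesgue density at the starting points, one sees that for almost every such `x` the
segment does not leave `A` at a point of `ext_* A`. So it meets `K`, and covering `K` by small balls
shows that the set of these `x` has measure at most `C ‖h‖ H^{m-1}(K)`: the indicator of `A` is
Lipschitz along translations in `L¹`. The same argument inside a ball is a relative isoperimetric
inequality.

Let `u` be a mollification of the indicator of `A` at a small scale `δ`. If `u x ≥ 1/3`, then `A`
occupies a fixed proportion of the ball of radius `δ` about `x`. When moreover `x ∈ ext_* A`, this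
proportion is balanced at some smaller radius, where the isoperimetric inequality bounds `r^{m-1}`
by `H^{m-1}(K ∩ B(x, r))`. By Vitali's covering theorem `{u ≥ 1/3} \ A` is therefore covered by
finitely many balls of radii `r_i ≤ 5 δ` with `∑ r_i^{m-1}` bounded independently of `δ`.
Multiplying `u` by cutoffs that vanish on these balls yields a smooth `v`, with a bounded
translation-Lipschitz constant, such that `{v ≥ 1/3} ⊆ A` and `{v ≥ 1}` nearly fills `A`.

Finally, after a small linear perturbation making the critical points countable, the coarea
inequality gives a level between `1/3` and `1` whose superlevel set is smooth of bounded perimeter.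
-/

section TranslationLipschitz

variable {E F : Type*} [NormedAddCommGroup E] [MeasurableSpace E] [NormedAddCommGroup F]
  {μ : Measure E}

/-- `f` is Lipschitz along translations in `L¹(μ)` with constant `C`; for an integrable `f` on `ℝ^m`
this says that `f` has bounded variation. -/
def TranslationLipschitzWith (C : ℝ≥0∞) (f : E → F) (μ : Measure E) : Prop :=
  ∀ h, ∫⁻ x, ‖f (x + h) - f x‖ₑ ∂μ ≤ C * ‖h‖ₑ

namespace TranslationLipschitzWith

lemma mono {f : E → F} {C D : ℝ≥0∞} (hf : TranslationLipschitzWith C f μ) (hCD : C ≤ D) :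
    TranslationLipschitzWith D f μ :=
  fun h => (hf h).trans (by gcongr)

lemma const_sub {f : E → F} {C : ℝ≥0∞} (hf : TranslationLipschitzWith C f μ) (c : F) :
    TranslationLipschitzWith C (fun x => c - f x) μ := fun h => by
  simpa only [sub_sub_sub_cancel_left, enorm_sub_rev (f _) (f (_ + h))] using hf h

lemma of_lipschitzWith [BorelSpace E] [μ.IsAddRightInvariant] {f : E → F} {K : NNReal} {S : Set E}
    (hf : LipschitzWith K f) (hS : Function.support f ⊆ S) :
    TranslationLipschitzWith (2 * K * μ S) f μ := by
  intro h
  let T := S ∪ (· + h) ⁻¹' S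
  have hpt x : ‖f (x + h) - f x‖ₑ ≤ T.indicator (fun _ => K * ‖h‖ₑ) x := by
    by_cases hx : x ∈ T
    · rw [indicator_of_mem hx]
      simpa [edist_eq_enorm_sub] using hf (x + h) x
    · have h₁ : f x = 0 := Function.notMem_support.1 fun hfx => hx (.inl (hS hfx))
      have h₂ : f (x + h) = 0 := Function.notMem_support.1 fun hfx => hx (.inr (hS hfx))
      simp [h₁, h₂]
  calc ∫⁻ x, ‖f (x + h) - f x‖ₑ ∂μ ≤ ∫⁻ x, T.indicator (fun _ => K * ‖h‖ₑ) x ∂μ :=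
        lintegral_mono hpt
    _ ≤ K * ‖h‖ₑ * μ T := lintegral_indicator_const_le _ _
    _ ≤ K * ‖h‖ₑ * (μ S + μ S) := by
        gcongr
        simpa only [measure_preimage_add_right] using measure_union_le (μ := μ) S ((· + h) ⁻¹' S)
    _ = 2 * K * μ S * ‖h‖ₑ := by ring

variable [BorelSpace E] {C D : ℝ≥0∞}

lemma add {f g : E → F} (hfm : StronglyMeasurable f) (hf : TranslationLipschitzWith C f μ)
    (hg : TranslationLipschitzWith D g μ) :
    TranslationLipschitzWith (C + D) (fun x => f x + g x) μ := fun h => by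
  have hm : Measurable fun x => ‖f (x + h) - f x‖ₑ :=
    ((hfm.comp_measurable (measurable_add_const h)).sub hfm).enorm
  calc ∫⁻ x, ‖f (x + h) + g (x + h) - (f x + g x)‖ₑ ∂μ
      ≤ ∫⁻ x, ‖f (x + h) - f x‖ₑ + ‖g (x + h) - g x‖ₑ ∂μ :=
        lintegral_mono fun x => by
          rw [add_sub_add_comm]
          exact enorm_add_le _ _
    _ = ∫⁻ x, ‖f (x + h) - f x‖ₑ ∂μ + ∫⁻ x, ‖g (x + h) - g x‖ₑ ∂μ := lintegral_add_left hm _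
    _ ≤ (C + D) * ‖h‖ₑ := by
        rw [add_mul]
        exact add_le_add (hf h) (hg h)

lemma mul {f g : E → ℝ} (hfm : Measurable f) (hf₁ : ∀ x, ‖f x‖ ≤ 1) (hg₁ : ∀ x, ‖g x‖ ≤ 1)
    (hf : TranslationLipschitzWith C f μ) (hg : TranslationLipschitzWith D g μ) :
    TranslationLipschitzWith (C + D) (fun x => f x * g x) μ := fun h => by
  have hm : Measurable fun x => ‖f (x + h) - f x‖ₑ := by fun_prop
  have hpt x : ‖f (x + h) * g (x + h) - f x * g x‖ₑ ≤
      ‖f (x + h) - f x‖ₑ + ‖g (x + h) - g x‖ₑ := by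
    simp only [← ofReal_norm, ← ENNReal.ofReal_add (norm_nonneg _) (norm_nonneg _)]
    refine ENNReal.ofReal_le_ofReal ?_
    calc ‖f (x + h) * g (x + h) - f x * g x‖
        = ‖(f (x + h) - f x) * g (x + h) + f x * (g (x + h) - g x)‖ := by ring_nf
      _ ≤ ‖f (x + h) - f x‖ * ‖g (x + h)‖ + ‖f x‖ * ‖g (x + h) - g x‖ := by
          simpa only [norm_mul] using
            norm_add_le ((f (x + h) - f x) * g (x + h)) (f x * (g (x + h) - g x))
      _ ≤ ‖f (x + h) - f x‖ + ‖g (x + h) - g x‖ :=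
          add_le_add (mul_le_of_le_one_right (norm_nonneg _) (hg₁ _))
            (mul_le_of_le_one_left (norm_nonneg _) (hf₁ _))
  calc ∫⁻ x, ‖f (x + h) * g (x + h) - f x * g x‖ₑ ∂μ
      ≤ ∫⁻ x, ‖f (x + h) - f x‖ₑ + ‖g (x + h) - g x‖ₑ ∂μ := lintegral_mono hpt
    _ = ∫⁻ x, ‖f (x + h) - f x‖ₑ ∂μ + ∫⁻ x, ‖g (x + h) - g x‖ₑ ∂μ := lintegral_add_left hm _
    _ ≤ (C + D) * ‖h‖ₑ := by
        rw [add_mul]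
        exact add_le_add (hf h) (hg h)

lemma prod {ι : Type*} {f : ι → E → ℝ} {C : ι → ℝ≥0∞} (s : Finset ι)
    (hfm : ∀ i, Measurable (f i)) (hf₁ : ∀ i x, ‖f i x‖ ≤ 1)
    (hf : ∀ i ∈ s, TranslationLipschitzWith (C i) (f i) μ) :
    TranslationLipschitzWith (∑ i ∈ s, C i) (fun x => ∏ i ∈ s, f i x) μ := by
  induction s using Finset.cons_induction with
  | empty => intro h; simp
  | cons i s hi ih =>
    simp only [Finset.prod_cons, Finset.sum_cons]
    refine mul (hfm i) (hf₁ i) (fun x => ?_) (hf i (Finset.mem_cons_self i s))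
      (ih fun j hj => hf j (Finset.mem_cons_of_mem hj))
    rw [norm_prod]
    exact Finset.prod_le_one (fun _ _ => norm_nonneg _) fun j _ => hf₁ j x

open scoped Convolution in
lemma convolution [NormedSpace ℝ F] [SecondCountableTopology E] [SFinite μ] [μ.IsAddLeftInvariant]
    [μ.IsNegInvariant] {k : E → ℝ} {f : E → F} (hk : Continuous k) (hkc : HasCompactSupport k)
    (hfi : LocallyIntegrable f μ) (hfm : StronglyMeasurable f)
    (hf : TranslationLipschitzWith C f μ) :
    TranslationLipschitzWith ((∫⁻ t, ‖k t‖ₑ ∂μ) * C) (k ⋆[.lsmul ℝ ℝ, μ] f) μ := fun h => by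
  have hex := hkc.convolutionExists_left (.lsmul ℝ ℝ) hk hfi
  have hpt x : ‖(k ⋆[.lsmul ℝ ℝ, μ] f) (x + h) - (k ⋆[.lsmul ℝ ℝ, μ] f) x‖ₑ ≤
      ∫⁻ t, ‖k t‖ₑ * ‖f (x - t + h) - f (x - t)‖ₑ ∂μ := by
    rw [convolution_def, convolution_def, ← integral_sub (hex (x + h)) (hex x)]
    refine (enorm_integral_le_lintegral_enorm _).trans_eq (lintegral_congr fun t => ?_)
    simp only [ContinuousLinearMap.lsmul_apply, ← smul_sub, enorm_smul, add_sub_right_comm]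
  have hm : Measurable fun p : E × E => ‖k p.2‖ₑ * ‖f (p.1 - p.2 + h) - f (p.1 - p.2)‖ₑ := by
    have hsub : Measurable fun p : E × E => p.1 - p.2 := measurable_fst.sub measurable_snd
    exact (hk.measurable.comp measurable_snd).enorm.mul
      ((hfm.comp_measurable (hsub.add_const h)).sub (hfm.comp_measurable hsub)).enorm
  have hfh : Measurable fun x => ‖f (x + h) - f x‖ₑ :=
    ((hfm.comp_measurable (measurable_add_const h)).sub hfm).enorm
  calc _ ≤ ∫⁻ x, ∫⁻ t, ‖k t‖ₑ * ‖f (x - t + h) - f (x - t)‖ₑ ∂μ ∂μ := lintegral_mono hpt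
    _ = ∫⁻ t, ∫⁻ x, ‖k t‖ₑ * ‖f (x - t + h) - f (x - t)‖ₑ ∂μ ∂μ :=
        lintegral_lintegral_swap hm.aemeasurable
    _ = ∫⁻ t, ‖k t‖ₑ * ∫⁻ x, ‖f (x + h) - f x‖ₑ ∂μ ∂μ := by
        refine lintegral_congr fun t => ?_
        rw [← lintegral_sub_right_eq_self (fun x => ‖f (x + h) - f x‖ₑ) t]
        exact lintegral_const_mul _ (hfh.comp (measurable_sub_const t))
    _ ≤ ∫⁻ t, ‖k t‖ₑ * (C * ‖h‖ₑ) ∂μ := by gcongr; exact hf h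
    _ = (∫⁻ t, ‖k t‖ₑ ∂μ) * C * ‖h‖ₑ := by
        rw [lintegral_mul_const _ hk.measurable.enorm, mul_assoc]

end TranslationLipschitzWith

end TranslationLipschitz

section Perimeter

lemma enorm_integral_translate_sub_mul_le {E : Type*} [AddCommGroup E] [MeasurableSpace E]
    [MeasurableAdd E] {μ : Measure E} [μ.IsAddRightInvariant] {φ g : E → ℝ} (hφm : Measurable φ)
    (hφ : ∀ x, ‖φ x‖ ≤ 1) (hg : Integrable g μ) (h : E) :
    ‖∫ x, (φ (x + h) - φ x) * g x ∂μ‖ₑ ≤ ∫⁻ x, ‖g (x + h) - g x‖ₑ ∂μ := by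
  have hφh : Measurable fun x => φ (x + h) := hφm.comp (measurable_add_const h)
  have hint : Integrable (fun x => φ (x + h) * g x) μ :=
    hg.bdd_mul hφh.aestronglyMeasurable (ae_of_all _ fun x => hφ (x + h))
  have hinth : Integrable (fun x => φ (x + h) * g (x + h)) μ :=
    (hg.comp_add_right h).bdd_mul hφh.aestronglyMeasurable (ae_of_all _ fun x => hφ (x + h))
  have hparts : ∫ x, (φ (x + h) - φ x) * g x ∂μ = ∫ x, φ (x + h) * (g x - g (x + h)) ∂μ := by
    simp only [sub_mul, mul_sub]
    rw [integral_sub hint (hg.bdd_mul hφm.aestronglyMeasurable (ae_of_all _ hφ)),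
      integral_sub hint hinth, integral_add_right_eq_self (fun x => φ x * g x)]
  rw [hparts]
  refine (enorm_integral_le_lintegral_enorm _).trans (lintegral_mono fun x => ?_)
  rw [enorm_mul, enorm_sub_rev (g x)]
  exact mul_le_of_le_one_left' (by simpa [← ofReal_norm] using hφ (x + h))

variable {m : ℕ}

lemma lineDeriv_apply_single {φ : Euc m → Euc m} (hφ : Differentiable ℝ φ) (x : Euc m) (i : Fin m) :
    lineDeriv ℝ (fun y => φ y i) x (EuclideanSpace.single i 1) =
      ⟪fderiv ℝ φ x (EuclideanSpace.single i 1), EuclideanSpace.single i (1 : ℝ)⟫ := by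
  have hd : HasFDerivAt (fun y => φ y i)
      ((EuclideanSpace.proj i : Euc m →L[ℝ] ℝ).comp (fderiv ℝ φ x)) x :=
    (EuclideanSpace.proj i : Euc m →L[ℝ] ℝ).hasFDerivAt.comp x (hφ x).hasFDerivAt
  rw [hd.differentiableAt.lineDeriv_eq_fderiv, hd.fderiv]
  simp [EuclideanSpace.inner_single_right]

lemma tendsto_sum_integral_slope_mul_indicator {φ : Euc m → Euc m} (hφ : ContDiff ℝ 1 φ)
    (hφc : HasCompactSupport φ) {V : Set (Euc m)} (hV : MeasurableSet V) (hfin : volume V ≠ ⊤) :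
    Tendsto (fun t : ℝ => ∑ i, ∫ x, t⁻¹ • (φ (x + t • EuclideanSpace.single i 1) i - φ x i) *
      V.indicator 1 x) (𝓝[>] 0) (𝓝 (∫ x in V, pdiv φ x)) := by
  obtain ⟨K, hK⟩ := hφ.lipschitzWith_of_hasCompactSupport hφc one_ne_zero
  have hKi (i : Fin m) :
      LipschitzWith (‖(EuclideanSpace.proj i : Euc m →L[ℝ] ℝ)‖₊ * K) fun x => φ x i :=
    (EuclideanSpace.proj i : Euc m →L[ℝ] ℝ).lipschitz.comp hK
  have hVint : Integrable (V.indicator (1 : Euc m → ℝ)) :=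
    (integrable_indicator_iff hV).2 (integrableOn_const hfin)
  have hpdiv : ∫ x in V, pdiv φ x = ∑ i, ∫ x,
      lineDeriv ℝ (fun y => φ y i) x (EuclideanSpace.single i 1) * V.indicator 1 x := by
    rw [← integral_finsetSum, ← integral_indicator hV]
    · congr 1 with x
      by_cases hx : x ∈ V
      · simp [hx, pdiv, ← lineDeriv_apply_single (hφ.differentiable one_ne_zero)]
      · simp [hx]
    · exact fun i _ => hVint.bdd_mul (aestronglyMeasurable_lineDeriv (hKi i).continuous _)
        (ae_of_all _ fun x => norm_lineDeriv_le_of_lipschitz ℝ (hKi i))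
  rw [hpdiv]
  exact tendsto_finsetSum _ fun i _ =>
    (hKi i).integral_inv_smul_sub_mul_tendsto_integral_lineDeriv_mul hVint _

lemma perimeter_univ_le_liminf {V : Set (Euc m)} (hV : MeasurableSet V) (hfin : volume V ≠ ⊤) :
    perimeter V univ ≤ liminf (fun t : ℝ => ∑ i, (∫⁻ x, ‖V.indicator (1 : Euc m → ℝ)
      (x + t • EuclideanSpace.single i 1) - V.indicator 1 x‖ₑ) / ENNReal.ofReal t) (𝓝[>] 0) := by
  have hVint : Integrable (V.indicator (1 : Euc m → ℝ)) :=
    (integrable_indicator_iff hV).2 (integrableOn_const hfin)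
  simp only [perimeter, iSup_le_iff]
  intro φ hφ hφc _ hφ₁
  have hlim := ENNReal.tendsto_ofReal (tendsto_sum_integral_slope_mul_indicator hφ hφc hV hfin)
  rw [← hlim.liminf_eq]
  refine liminf_le_liminf ?_
  filter_upwards [self_mem_nhdsWithin] with t (ht : 0 < t)
  refine (Finset.le_sum_of_subadditive ENNReal.ofReal ENNReal.ofReal_zero.le
    (fun _ _ => ENNReal.ofReal_add_le) _ _).trans (Finset.sum_le_sum fun i _ => ?_)
  have hφi x : ‖φ x i‖ ≤ 1 := (PiLp.norm_apply_le (φ x) i).trans (hφ₁ x)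
  have hmeas : Measurable fun x => φ x i := by
    have := hφ.continuous
    fun_prop
  simp only [smul_eq_mul, mul_assoc, integral_const_mul]
  rw [ENNReal.ofReal_mul (inv_nonneg.2 ht.le), ENNReal.ofReal_inv_of_pos ht, mul_comm,
    ← div_eq_mul_inv]
  gcongr
  exact (Real.ofReal_le_enorm _).trans (enorm_integral_translate_sub_mul_le hmeas hφi hVint _)

lemma lintegral_enorm_indicator_Iio_sub (a b : ℝ) :
    ∫⁻ t, ‖(Iio a).indicator (1 : ℝ → ℝ) t - (Iio b).indicator 1 t‖ₑ = ‖a - b‖ₑ := by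
  have hpt t : ‖(Iio a).indicator (1 : ℝ → ℝ) t - (Iio b).indicator 1 t‖ₑ =
      (Ico (min a b) (max a b)).indicator 1 t := by
    simp only [indicator, mem_Iio, mem_Ico, min_le_iff, lt_max_iff]
    split_ifs <;> simp <;> grind
  simp only [hpt]
  rw [lintegral_indicator_one measurableSet_Ico, Real.volume_Ico, max_sub_min_eq_abs',
    ← Real.enorm_eq_ofReal_abs]

lemma setLIntegral_perimeter_superlevel_le {w : Euc m → ℝ} (hw : Measurable w) {S : Set ℝ}
    (hS : MeasurableSet S) (hfin : ∀ t ∈ S, volume {x | t < w x} ≠ ⊤) {C : ℝ≥0∞}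
    (hC : TranslationLipschitzWith C w volume) :
    ∫⁻ t in S, perimeter {x | t < w x} univ ≤ m * C := by
  let χ (t : ℝ) : Euc m → ℝ := {x | t < w x}.indicator 1
  let D (h : Euc m) (t : ℝ) : ℝ≥0∞ := ∫⁻ x, ‖χ t (x + h) - χ t x‖ₑ
  have hχ : Measurable (Function.uncurry χ) :=
    measurable_one.indicator (measurableSet_lt measurable_fst (hw.comp measurable_snd))
  have hjoint (h : Euc m) : Measurable fun p : ℝ × Euc m => ‖χ p.1 (p.2 + h) - χ p.1 p.2‖ₑ :=
    ((hχ.comp (measurable_fst.prodMk (measurable_snd.add_const h))).sub hχ).enorm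
  have hD (h : Euc m) : Measurable (D h) := (hjoint h).lintegral_prod_right'
  have hDint (h : Euc m) : ∫⁻ t in S, D h t ≤ C * ‖h‖ₑ := calc
    ∫⁻ t in S, D h t ≤ ∫⁻ t, D h t := setLIntegral_le_lintegral _ _
    _ = ∫⁻ x, ∫⁻ t, ‖χ t (x + h) - χ t x‖ₑ := lintegral_lintegral_swap (hjoint h).aemeasurable
    _ = ∫⁻ x, ‖w (x + h) - w x‖ₑ :=
        lintegral_congr fun x => lintegral_enorm_indicator_Iio_sub (w (x + h)) (w x)
    _ ≤ C * ‖h‖ₑ := hC h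
  calc ∫⁻ t in S, perimeter {x | t < w x} univ
      ≤ ∫⁻ t in S, liminf (fun s : ℝ => ∑ i, D (s • EuclideanSpace.single i 1) t /
          ENNReal.ofReal s) (𝓝[>] 0) :=
        setLIntegral_mono' hS fun t ht =>
          perimeter_univ_le_liminf (measurableSet_lt measurable_const hw) (hfin t ht)
    _ ≤ liminf (fun s : ℝ => ∫⁻ t in S, ∑ i, D (s • EuclideanSpace.single i 1) t /
          ENNReal.ofReal s) (𝓝[>] 0) :=
        lintegral_liminf_le fun s => Finset.measurable_sum _ fun i _ => (hD _).div_const _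
    _ ≤ m * C := by
        refine liminf_le_of_frequently_le' (Eventually.frequently ?_)
        filter_upwards [self_mem_nhdsWithin] with s (hs : 0 < s)
        rw [lintegral_finsetSum _ fun i _ => (hD _).div_const _]
        refine (Finset.sum_le_card_nsmul _ _ C fun i _ => ?_).trans_eq (by simp)
        simp only [div_eq_mul_inv]
        rw [lintegral_mul_const _ (hD _), ← div_eq_mul_inv]
        refine ENNReal.div_le_of_le_mul ((hDint _).trans_eq ?_)
        simp [← ofReal_norm, norm_smul, abs_of_pos hs]

end Perimeter

section Sard

variable {E : Type*} [NormedAddCommGroup E]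

lemma ae_countable_preimage_singleton [NormedSpace ℝ E] [FiniteDimensional ℝ E] [MeasurableSpace E]
    [BorelSpace E] (μ : Measure E) [μ.IsAddHaarMeasure] {G : E → E} (hG : Differentiable ℝ G) :
    ∀ᵐ b ∂μ, (G ⁻¹' {b}).Countable := by
  have hcrit : μ (G '' {x | (fderiv ℝ G x).det = 0}) = 0 :=
    addHaar_image_eq_zero_of_det_fderivWithin_eq_zero μ
      (fun x _ => (hG x).hasFDerivAt.hasFDerivWithinAt) fun _ hx => hx
  filter_upwards [compl_mem_ae_iff.2 hcrit] with b hb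
  have hdisc : DiscreteTopology (G ⁻¹' {b}) := by
    refine discreteTopology_subtype_iff.2 fun x hx => ?_
    have hdet : (fderiv ℝ G x).det ≠ 0 := fun h => hb ⟨x, h, hx⟩
    have hanti : ∃ K, AntilipschitzWith K (fderiv ℝ G x) :=
      ⟨_, ((fderiv ℝ G x).toContinuousLinearEquivOfDetNeZero hdet).antilipschitz⟩
    exact disjoint_iff.1 (disjoint_principal_right.2 ((hG x).hasFDerivAt.eventually_ne hanti))
  exact TopologicalSpace.separableSpace_iff_countable.1
    (inferInstance : TopologicalSpace.SeparableSpace (G ⁻¹' {b}))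

lemma dense_setOf_countable_fderiv_add_eq_zero [InnerProductSpace ℝ E] [FiniteDimensional ℝ E]
    {v : E → ℝ} (hv : ContDiff ℝ 2 v) :
    Dense {a : E | {x | fderiv ℝ v x + innerSL ℝ a = 0}.Countable} := by
  borelize E
  let e := InnerProductSpace.toDual ℝ E
  let G : E → E := fun x => e.symm (-fderiv ℝ v x)
  have hG : Differentiable ℝ G :=
    e.symm.differentiable.comp ((hv.fderiv_right le_rfl).differentiable one_ne_zero).neg
  have hae := ae_countable_preimage_singleton volume hG
  have hfib a : G ⁻¹' {a} = {x | fderiv ℝ v x + innerSL ℝ a = 0} := by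
    ext x
    simp only [mem_preimage, mem_singleton_iff, mem_ofPred_eq, G, e.symm_apply_eq,
      neg_eq_iff_add_eq_zero]
    rfl
  simp only [hfib] at hae
  have hint := Measure.interior_eq_empty_of_null (ae_iff.1 hae)
  rwa [interior_eq_empty_iff_dense_compl, ← compl_ofPred, compl_compl] at hint

end Sard

section Superlevel

variable {m : ℕ}

lemma exists_perturbation_countable_critical {v : Euc m → ℝ} (hv : ContDiff ℝ (⊤ : ℕ∞) v) {C : ℝ≥0∞}
    (hC : TranslationLipschitzWith C v volume) {S : Set (Euc m)} (hS : Bornology.IsBounded S)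
    {ε : ℝ} (hε : 0 < ε) :
    ∃ w : Euc m → ℝ, ContDiff ℝ (⊤ : ℕ∞) w ∧ TranslationLipschitzWith (C + 1) w volume ∧
      (∀ x, |w x - v x| ≤ ε) ∧ (S ∩ {x | fderiv ℝ w x = 0}).Countable := by
  obtain ⟨R, hR, hSR⟩ := hS.subset_ball_lt 0 0
  let χ : ContDiffBump (0 : Euc m) := ⟨R, R + 1, hR, by linarith⟩
  let F : Euc m → Euc m := fun x => χ x • x
  have hF : ContDiff ℝ (⊤ : ℕ∞) F := χ.contDiff.smul contDiff_id
  have hFc : HasCompactSupport F := χ.hasCompactSupport.smul_right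
  obtain ⟨K, hK⟩ := hF.lipschitzWith_of_hasCompactSupport hFc (by simp)
  obtain ⟨B, hB⟩ := hFc.exists_bound_of_continuous hF.continuous
  let M : ℝ≥0∞ := 2 * K * volume (tsupport F)
  have hM : M ≠ ⊤ := ENNReal.mul_ne_top (by finiteness) hFc.isCompact.measure_lt_top.ne
  have hsmall (c δ : ℝ) (hδ : 0 < δ) : ∀ᶠ a : Euc m in 𝓝 0, ‖a‖ * c < δ :=
    ((continuous_norm.mul_const c).tendsto' 0 0 (by simp)).eventually_lt_const hδ
  obtain ⟨a, ha, haB, haM⟩ := (dense_setOf_countable_fderiv_add_eq_zero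
    (hv.of_le (WithTop.coe_le_coe.2 le_top))).inter_nhds_nonempty
      ((hsmall B ε hε).and (hsmall M.toReal 1 one_pos))
  have hTLip : TranslationLipschitzWith 1 (fun x => ⟪a, F x⟫) volume := by
    refine (TranslationLipschitzWith.of_lipschitzWith ((innerSL ℝ a).lipschitz.comp hK)
      (S := tsupport F) ((Function.support_comp_subset (map_zero _) F).trans
        (subset_tsupport F))).mono ?_
    calc 2 * (‖innerSL ℝ a‖₊ * K : NNReal) * volume (tsupport F) = ENNReal.ofReal ‖a‖ * M := by
          rw [← innerSL_apply_norm (𝕜 := ℝ) a, ofReal_norm]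
          simp only [M, ENNReal.coe_mul, enorm_eq_nnnorm]
          ring
      _ = ENNReal.ofReal (‖a‖ * M.toReal) := by
          rw [ENNReal.ofReal_mul (norm_nonneg a), ENNReal.ofReal_toReal hM]
      _ ≤ 1 := ENNReal.ofReal_le_one.2 haM.le
  refine ⟨fun x => v x + ⟪a, F x⟫, hv.add (contDiff_const.inner ℝ hF),
    hC.add hv.continuous.stronglyMeasurable hTLip, fun x => ?_, ha.mono ?_⟩
  · rw [add_sub_cancel_left]
    calc |⟪a, F x⟫| ≤ ‖a‖ * ‖F x‖ := abs_real_inner_le_norm _ _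
      _ ≤ ‖a‖ * B := by gcongr; exact hB x
      _ ≤ ε := haB.le
  · rintro x ⟨hxS, hx⟩
    have hχ : (fun y => v y + ⟪a, F y⟫) =ᶠ[𝓝 x] fun y => v y + innerSL ℝ a y := by
      filter_upwards [isOpen_ball.mem_nhds (hSR hxS)] with y hy
      simp [F, χ.one_of_mem_closedBall (ball_subset_closedBall hy)]
    have hd := ((hv.differentiable (by simp) x).hasFDerivAt.add (innerSL ℝ a).hasFDerivAt).fderiv
    exact hd.symm.trans (hχ.fderiv_eq.symm.trans hx)

lemma isSmoothSet_superlevel {f : Euc m → ℝ} (hf : ContDiff ℝ (⊤ : ℕ∞) f) {t : ℝ}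
    (hbdd : Bornology.IsBounded {x | t < f x}) (hreg : ∀ x, f x = t → fderiv ℝ f x ≠ 0) :
    IsSmoothSet {x | t < f x} := by
  refine ⟨isOpen_lt continuous_const hf.continuous, hbdd, fun x hx => ?_⟩
  have hxt : t = f x := frontier_lt_subset_eq continuous_const hf.continuous hx
  refine ⟨{y | fderiv ℝ f y ≠ 0}, fun y => t - f y,
    isOpen_ne_fun (hf.continuous_fderiv (by simp)) continuous_const, hreg x hxt.symm,
    contDiff_const.sub hf, fun y hy => ?_, by simp only [sub_neg]⟩
  rwa [fderiv_const_sub, neg_ne_zero]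

lemma exists_lt_of_setLIntegral_lt {α : Type*} [MeasurableSpace α] {μ : Measure α} {f : α → ℝ≥0∞}
    {s N : Set α} {M : ℝ≥0∞} (hs : MeasurableSet s) (hN : μ N = 0)
    (h : ∫⁻ x in s, f x ∂μ < M * μ s) : ∃ x ∈ s \ N, f x < M := by
  by_contra! hM
  refine h.not_ge ?_
  rw [← setLIntegral_const]
  refine setLIntegral_mono_ae' hs ?_
  filter_upwards [compl_mem_ae_iff.2 hN] with x hxN hxs using hM x ⟨hxs, hxN⟩

variable (m) in
theorem exists_isSmoothSet_between_superlevels {a b : ℝ} (hab : a < b) {C : ℝ≥0∞} (hC : C ≠ ⊤) :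
    ∃ M : ℝ≥0∞, M ≠ ⊤ ∧ ∀ v : Euc m → ℝ, ContDiff ℝ (⊤ : ℕ∞) v →
      TranslationLipschitzWith C v volume → Bornology.IsBounded {x | a ≤ v x} →
      ∃ V, IsSmoothSet V ∧ closure V ⊆ {x | a ≤ v x} ∧ {x | b ≤ v x} ⊆ V ∧
        perimeter V univ ≤ M := by
  let ε := (b - a) / 3
  have hε : 0 < ε := by dsimp only [ε]; linarith
  have hεab : a + ε + ε = b - ε := by dsimp only [ε]; ring
  let I := Ioo (a + ε) (b - ε)
  have hI : volume I = ENNReal.ofReal ε := by rw [Real.volume_Ioo, ← hεab, add_sub_cancel_left]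
  have hI₀ : volume I ≠ 0 := by simpa [hI] using hε
  have hIt : volume I ≠ ⊤ := by simp [hI]
  refine ⟨m * (C + 1) / volume I + 1, by finiteness, fun v hv hvC hbdd => ?_⟩
  obtain ⟨w, hw, hwC, hwv, hcrit⟩ := exists_perturbation_countable_critical hv hvC hbdd hε
  have hsub t (ht : t ∈ I) : {x | t < w x} ⊆ {x | a ≤ v x} := fun x (hx : t < w x) =>
    show a ≤ v x by linarith [(abs_le.1 (hwv x)).2, ht.1]
  have hint : ∫⁻ t in I, perimeter {x | t < w x} univ <
      (m * (C + 1) / volume I + 1) * volume I := by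
    refine (setLIntegral_perimeter_superlevel_le hw.continuous.measurable measurableSet_Ioo
      (fun t ht => (hbdd.subset (hsub t ht)).measure_lt_top.ne) hwC).trans_lt ?_
    rw [add_mul, ENNReal.div_mul_cancel hI₀ hIt, one_mul]
    exact ENNReal.lt_add_right (by finiteness) hI₀
  obtain ⟨t, ⟨htI, htN⟩, htP⟩ :=
    exists_lt_of_setLIntegral_lt measurableSet_Ioo ((hcrit.image w).measure_zero volume) hint
  refine ⟨{x | t < w x}, isSmoothSet_superlevel hw (hbdd.subset (hsub t htI)) fun x hxt hx => ?_,
    closure_minimal (hsub t htI) (isClosed_le continuous_const hv.continuous),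
    fun x (hx : b ≤ v x) => show t < w x by linarith [(abs_le.1 (hwv x)).1, htI.2], htP.le⟩
  exact htN ⟨x, ⟨show a ≤ v x by linarith [(abs_le.1 (hwv x)).2, htI.1], hx⟩, hxt⟩

end Superlevel

section HausdorffCover

variable {X : Type*} [MetricSpace X]

lemma exists_subset_ball_rpow_le {t : Set X} (ht : t.Nonempty) {δ : ℝ}
    (hδ : ediam t < ENNReal.ofReal δ) {s : ℝ} (hs : 0 ≤ s) {ε : ℝ≥0∞} (hε : ε ≠ 0) :
    ∃ x r, 0 < r ∧ r ≤ δ ∧ t ⊆ ball x r ∧ ENNReal.ofReal r ^ s ≤ ediam t ^ s + ε := by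
  have hfin : ediam t ≠ ⊤ := hδ.ne_top
  have hcont : Tendsto (fun r : ℝ => ENNReal.ofReal r ^ s) (𝓝[>] (ediam t).toReal)
      (𝓝 (ediam t ^ s)) := by
    have hc : Continuous fun r : ℝ => ENNReal.ofReal r ^ s :=
      ENNReal.continuous_rpow_const.comp ENNReal.continuous_ofReal
    simpa only [ENNReal.ofReal_toReal hfin] using
      (hc.tendsto (ediam t).toReal).mono_left nhdsWithin_le_nhds
  have hlt : ediam t ^ s < ediam t ^ s + ε :=
    ENNReal.lt_add_right (ENNReal.rpow_ne_top_of_nonneg hs hfin) hε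
  have hδ' : (ediam t).toReal < δ := (ENNReal.lt_ofReal_iff_toReal_lt hfin).1 hδ
  obtain ⟨r, hr, hdr, hrδ⟩ := ((hcont.eventually_lt_const hlt).and (Ioo_mem_nhdsGT hδ')).exists
  refine ⟨ht.some, r, ENNReal.toReal_nonneg.trans_lt hdr, hrδ.le, fun y hy => ?_, hr.le⟩
  rw [mem_ball, dist_edist]
  exact (ENNReal.toReal_mono hfin (edist_le_ediam_of_mem hy ht.some_mem)).trans_lt hdr

lemma exists_ball_cover_of_hausdorffMeasure_lt [MeasurableSpace X] [BorelSpace X] {S : Set X}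
    {s : ℝ} (hs : 0 ≤ s) {c : ℝ≥0∞} (hc : μH[s] S < c) {δ : ℝ} (hδ : 0 < δ) :
    ∃ (ι : Type) (_ : Countable ι) (x : ι → X) (r : ι → ℝ), (∀ i, 0 < r i ∧ r i ≤ δ) ∧
      S ⊆ ⋃ i, ball (x i) (r i) ∧ ∑' i, ENNReal.ofReal (r i) ^ s ≤ c := by
  rw [Measure.hausdorffMeasure_apply] at hc
  have hδ₂ : 0 < ENNReal.ofReal (δ / 2) := by simpa using hδ
  have hcover := (le_iSup₂ (f := fun (r : ℝ≥0∞) (_ : 0 < r) =>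
    ⨅ (t : ℕ → Set X) (_ : S ⊆ ⋃ n, t n) (_ : ∀ n, ediam (t n) ≤ r),
      ∑' n, ⨆ _ : (t n).Nonempty, ediam (t n) ^ s) (ENNReal.ofReal (δ / 2)) hδ₂).trans_lt hc
  simp only [iInf_lt_iff] at hcover
  obtain ⟨t, hSt, htδ, hsum⟩ := hcover
  let ι := {n // (t n).Nonempty}
  obtain ⟨ε, hε, hεsum⟩ := ENNReal.exists_pos_sum_of_countable' (tsub_pos_of_lt hsum).ne' ι
  have hdiam (n : ℕ) : ediam (t n) < ENNReal.ofReal δ :=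
    (htδ n).trans_lt ((ENNReal.ofReal_lt_ofReal_iff hδ).2 (half_lt_self hδ))
  choose x r hr₀ hrδ hball hr using fun i : ι =>
    exists_subset_ball_rpow_le i.2 (hdiam i) hs (hε i).ne'
  refine ⟨ι, inferInstance, x, r, fun i => ⟨hr₀ i, hrδ i⟩, fun y hy => ?_, ?_⟩
  · obtain ⟨n, hn⟩ := mem_iUnion.1 (hSt hy)
    exact mem_iUnion.2 ⟨⟨n, y, hn⟩, hball _ hn⟩
  · have hdiams : ∑' i : ι, ediam (t i) ^ s ≤ ∑' n, ⨆ _ : (t n).Nonempty, ediam (t n) ^ s := by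
      refine (ENNReal.tsum_le_tsum fun i : ι => ?_).trans
        (ENNReal.tsum_comp_le_tsum_of_injective Subtype.val_injective _)
      exact le_iSup (fun _ : (t i).Nonempty => ediam (t i) ^ s) i.2
    calc ∑' i, ENNReal.ofReal (r i) ^ s ≤ ∑' i : ι, (ediam (t i) ^ s + ε i) :=
          ENNReal.tsum_le_tsum hr
      _ = ∑' i : ι, ediam (t i) ^ s + ∑' i, ε i := ENNReal.tsum_add
      _ ≤ _ := add_le_add hdiams hεsum.le
      _ = c := add_tsub_cancel_of_le hsum.le

end HausdorffCover

section Sweep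

variable {E : Type*} [NormedAddCommGroup E] [NormedSpace ℝ E]

/-- The points `x` such that the segment from `x` to `x + h` meets `S`. -/
def sweep (h : E) (S : Set E) : Set E :=
  {x | ∃ s ∈ Icc (0 : ℝ) 1, x + s • h ∈ S}

lemma sweep_ball_subset {h : E} {N : ℕ} (hN : 0 < N) {ρ : ℝ} (hNρ : ‖h‖ ≤ N * ρ) (c : E) :
    sweep h (ball c ρ) ⊆
      ⋃ j ∈ Finset.range (N + 1), ball (c - ((j : ℝ) / N) • h) (2 * ρ) := by
  have hN' : (0 : ℝ) < N := by exact_mod_cast hN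
  rintro x ⟨s, ⟨hs₀, hs₁⟩, hx⟩
  refine mem_iUnion₂.2 ⟨⌊s * N⌋₊, ?_, ?_⟩
  · rw [Finset.mem_range, Nat.lt_succ_iff]
    exact Nat.floor_le_of_le (mul_le_of_le_one_left hN'.le hs₁)
  have hfloor : (⌊s * N⌋₊ : ℝ) ≤ s * N := Nat.floor_le (by positivity)
  have hfloor' : s * N < ⌊s * N⌋₊ + 1 := Nat.lt_floor_add_one _
  have hs : |s - ⌊s * N⌋₊ / N| ≤ 1 / N := by
    rw [← mul_div_cancel_right₀ s hN'.ne', ← sub_div, abs_div, abs_of_pos hN',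
      mul_div_cancel_right₀ s hN'.ne', abs_of_nonneg (by linarith)]
    gcongr
    linarith
  have hstep : ‖(s - ⌊s * N⌋₊ / N) • h‖ ≤ ρ := calc
    ‖(s - ⌊s * N⌋₊ / N) • h‖ ≤ 1 / N * ‖h‖ := by
      rw [norm_smul, Real.norm_eq_abs]
      gcongr
    _ ≤ ρ := by rwa [one_div, inv_mul_le_iff₀ hN']
  rw [mem_ball, dist_eq_norm] at hx ⊢
  calc ‖x - (c - ((⌊s * N⌋₊ : ℝ) / N) • h)‖
      = ‖(x + s • h - c) - (s - ⌊s * N⌋₊ / N) • h‖ := by rw [sub_smul]; congr 1; abel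
    _ ≤ ‖x + s • h - c‖ + ‖(s - ⌊s * N⌋₊ / N) • h‖ := norm_sub_le _ _
    _ < 2 * ρ := by linarith

variable [FiniteDimensional ℝ E] [MeasurableSpace E] [BorelSpace E] (μ : Measure E)
  [μ.IsAddHaarMeasure] {d : ℕ}

lemma measure_sweep_ball_le (hd : Module.finrank ℝ E = d + 1) (h c : E) {ρ : ℝ} (hρ : 0 < ρ)
    (hρh : ρ ≤ ‖h‖) :
    μ (sweep h (ball c ρ)) ≤
      3 * 2 ^ (d + 1) * μ (ball 0 1) * ‖h‖ₑ * ENNReal.ofReal ρ ^ d := by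
  have : Nontrivial E := Module.nontrivial_of_finrank_pos (R := ℝ) (by omega)
  let N := ⌈‖h‖ / ρ⌉₊
  have hN : 0 < N := Nat.ceil_pos.2 (div_pos (hρ.trans_le hρh) hρ)
  have hNρ : ‖h‖ ≤ N * ρ := (div_le_iff₀ hρ).1 (Nat.le_ceil _)
  have hN₃ : ((N + 1 : ℕ) : ℝ≥0∞) * ENNReal.ofReal ρ ≤ 3 * ‖h‖ₑ := by
    rw [← ofReal_norm, ← ENNReal.ofReal_natCast, ← ENNReal.ofReal_mul (by positivity),
      ← ENNReal.ofReal_ofNat 3, ← ENNReal.ofReal_mul (by norm_num)]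
    refine ENNReal.ofReal_le_ofReal ?_
    have hceil : (N : ℝ) * ρ < (‖h‖ / ρ + 1) * ρ := by
      gcongr
      exact Nat.ceil_lt_add_one (by positivity)
    rw [add_mul, div_mul_cancel₀ _ hρ.ne'] at hceil
    push_cast
    linarith
  have hball (j : ℕ) : μ (ball (c - ((j : ℝ) / N) • h) (2 * ρ)) =
      ENNReal.ofReal (2 * ρ) ^ (d + 1) * μ (ball 0 1) := by
    rw [Measure.addHaar_ball _ _ (by positivity), hd, ENNReal.ofReal_pow (by positivity)]
  calc μ (sweep h (ball c ρ))
      ≤ ∑ j ∈ Finset.range (N + 1), μ (ball (c - ((j : ℝ) / N) • h) (2 * ρ)) :=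
        (measure_mono (sweep_ball_subset hN hNρ c)).trans (measure_biUnion_finset_le _ _)
    _ = (N + 1 : ℕ) * ENNReal.ofReal ρ * (2 ^ (d + 1) * ENNReal.ofReal ρ ^ d * μ (ball 0 1)) := by
        simp only [hball, Finset.sum_const, Finset.card_range, nsmul_eq_mul]
        rw [ENNReal.ofReal_mul zero_le_two, ENNReal.ofReal_ofNat]
        ring
    _ ≤ 3 * ‖h‖ₑ * (2 ^ (d + 1) * ENNReal.ofReal ρ ^ d * μ (ball 0 1)) := by gcongr
    _ = _ := by ring

theorem measure_sweep_le (hd : Module.finrank ℝ E = d + 1) {h : E} (hh : h ≠ 0) (S : Set E) :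
    μ (sweep h S) ≤ 3 * 2 ^ (d + 1) * μ (ball 0 1) * ‖h‖ₑ * μH[(d : ℝ)] S := by
  set K := 3 * 2 ^ (d + 1) * μ (ball 0 1) * ‖h‖ₑ
  have hK₀ : K ≠ 0 := by
    simp [K, hh, (measure_ball_pos μ (0 : E) one_pos).ne']
  have hKt : K ≠ ⊤ := by
    have := (measure_ball_lt_top (μ := μ) (x := (0 : E)) (r := 1)).ne
    finiteness
  rw [mul_comm, ← ENNReal.div_le_iff hK₀ hKt]
  refine le_of_forall_gt_imp_ge_of_dense fun c hc => ?_
  obtain ⟨ι, _, x, r, hr, hcov, hsum⟩ :=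
    exists_ball_cover_of_hausdorffMeasure_lt d.cast_nonneg hc (norm_pos_iff.2 hh)
  have hsweep : sweep h S ⊆ ⋃ i, sweep h (ball (x i) (r i)) := by
    rintro y ⟨s, hs, hy⟩
    obtain ⟨i, hi⟩ := mem_iUnion.1 (hcov hy)
    exact mem_iUnion.2 ⟨i, s, hs, hi⟩
  rw [ENNReal.div_le_iff hK₀ hKt, mul_comm]
  calc μ (sweep h S) ≤ ∑' i, μ (sweep h (ball (x i) (r i))) :=
        (measure_mono hsweep).trans (measure_iUnion_le _)
    _ ≤ ∑' i, K * ENNReal.ofReal (r i) ^ d :=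
        ENNReal.tsum_le_tsum fun i => measure_sweep_ball_le μ hd h (x i) (hr i).1 (hr i).2
    _ = K * ∑' i, ENNReal.ofReal (r i) ^ d := ENNReal.tsum_mul_left
    _ ≤ K * c := by
        gcongr
        simpa only [ENNReal.rpow_natCast] using hsum

lemma measure_eq_zero_of_hausdorffMeasure_ne_top (hd : Module.finrank ℝ E = d + 1) {S : Set E}
    (hS : μH[(d : ℝ)] S ≠ ⊤) : μ S = 0 := by
  have hzero : μH[(Module.finrank ℝ E : ℝ)] S = 0 :=
    (Measure.hausdorffMeasure_zero_or_top (by simp [hd]) S).resolve_right hS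
  exact Measure.absolutelyContinuous_isAddHaarMeasure μ μH[(Module.finrank ℝ E : ℝ)] hzero

end Sweep

section ExitTime

variable {E : Type*} [NormedAddCommGroup E] [NormedSpace ℝ E] {A : Set E} {h x : E} {s : ℝ}

/-- The first time in `[0, 1]` at which `s ↦ x + s • h` is outside `A`, and `1` if there is no
such time. -/
def exitTime (A : Set E) (h x : E) : ℝ :=
  sInf (insert 1 {s | 0 ≤ s ∧ x + s • h ∉ A})

lemma bddBelow_insert_exit_times (A : Set E) (h x : E) :
    BddBelow (insert (1 : ℝ) {s | 0 ≤ s ∧ x + s • h ∉ A}) :=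
  bddBelow_insert.2 ⟨0, fun _ hs => hs.1⟩

lemma exitTime_nonneg (A : Set E) (h x : E) : 0 ≤ exitTime A h x :=
  le_csInf (insert_nonempty _ _) (by rintro s (rfl | hs); exacts [zero_le_one, hs.1])

lemma exitTime_le_one (A : Set E) (h x : E) : exitTime A h x ≤ 1 :=
  csInf_le (bddBelow_insert_exit_times A h x) (mem_insert _ _)

lemma add_smul_mem_of_lt_exitTime (hs : 0 ≤ s) (hsx : s < exitTime A h x) : x + s • h ∈ A := by
  by_contra hxs
  exact hsx.not_ge (csInf_le (bddBelow_insert_exit_times A h x) (Or.inr ⟨hs, hxs⟩))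

lemma exitTime_eq_one_or_notMem (hA : IsOpen A) (h x : E) :
    exitTime A h x = 1 ∨ x + exitTime A h x • h ∉ A := by
  have hline : Continuous fun s : ℝ => x + s • h := by fun_prop
  have hclosed : IsClosed (insert (1 : ℝ) {s | 0 ≤ s ∧ x + s • h ∉ A}) :=
    isClosed_singleton.union (isClosed_Ici.inter (hA.isClosed_compl.preimage hline))
  exact (hclosed.csInf_mem (insert_nonempty _ _) (bddBelow_insert_exit_times A h x)).imp_right
    And.right

lemma exitTime_pos (hA : IsOpen A) (hx : x ∈ A) : 0 < exitTime A h x := by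
  refine (exitTime_nonneg A h x).lt_of_ne fun h₀ => ?_
  have := exitTime_eq_one_or_notMem hA h x
  simp [← h₀, hx] at this

lemma add_exitTime_smul_mem_frontier (hA : IsOpen A) (hx : x ∈ A) (hxh : x + h ∉ A) :
    x + exitTime A h x • h ∈ frontier A := by
  have hpos : 0 < exitTime A h x := exitTime_pos hA hx
  rw [hA.frontier_eq]
  refine ⟨?_, ?_⟩
  · have hline : Continuous fun s : ℝ => x + s • h := by fun_prop
    have hT : exitTime A h x ∈ closure (Ico 0 (exitTime A h x)) := by
      rw [closure_Ico hpos.ne]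
      exact right_mem_Icc.2 hpos.le
    exact map_mem_closure (f := fun s : ℝ => x + s • h) hline hT fun s hs =>
      add_smul_mem_of_lt_exitTime hs.1 hs.2
  · rcases exitTime_eq_one_or_notMem hA h x with h₁ | hT
    · rwa [h₁, one_smul]
    · exact hT

lemma lowerSemicontinuous_exitTime (hA : IsOpen A) (h : E) :
    LowerSemicontinuous (exitTime A h) := by
  intro x a ha
  obtain ⟨b, hab, hbx⟩ := exists_between ha
  have hline : Continuous fun p : E × ℝ => p.1 + p.2 • h := by fun_prop
  have hev : ∀ᶠ y in 𝓝 x, ∀ s ∈ Icc 0 b, y + s • h ∈ A :=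
    isCompact_Icc.eventually_forall_of_forall_eventually fun s hs =>
      hline.continuousAt.eventually
        (hA.mem_nhds (add_smul_mem_of_lt_exitTime hs.1 (hs.2.trans_lt hbx)))
  filter_upwards [hev] with y hy
  refine hab.trans_le (le_csInf (insert_nonempty _ _) ?_)
  rintro s (rfl | ⟨hs₀, hs⟩)
  · exact hbx.le.trans (exitTime_le_one A h x)
  · exact le_of_not_gt fun hsb => hs (hy s ⟨hs₀, hsb.le⟩)

end ExitTime

section ExitDensity

variable {X : Type*} [PseudoMetricSpace X] [SecondCountableTopology X] [MeasurableSpace X]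
  [BorelSpace X] (ν : Measure X) [SFinite ν]

lemma measurable_measure_inter_closedBall {S : Set X} (hS : MeasurableSet S) (r : ℝ) :
    Measurable fun x => ν (S ∩ closedBall x r) := by
  have hpairs : MeasurableSet {p : X × X | p.2 ∈ S ∧ dist p.2 p.1 ≤ r} :=
    (hS.preimage measurable_snd).inter
      (measurableSet_le (measurable_snd.dist measurable_fst) measurable_const)
  exact measurable_measure_prodMk_left hpairs

lemma lintegral_measure_closedBall_le_two_mul {T : X → ℝ} (hT : Measurable T) (ρ : ℝ) :
    ∫⁻ x, ν (closedBall x ρ) ∂ν ≤ 2 * ∫⁻ x, ν (closedBall x ρ ∩ {y | T x ≤ T y}) ∂ν := by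
  have hball : MeasurableSet {p : X × X | dist p.2 p.1 ≤ ρ} :=
    measurableSet_le (measurable_snd.dist measurable_fst) measurable_const
  have horder : MeasurableSet ({p : X × X | dist p.2 p.1 ≤ ρ} ∩ {p | T p.1 ≤ T p.2}) :=
    hball.inter (measurableSet_le (hT.comp measurable_fst) (hT.comp measurable_snd))
  have hpairs : {p : X × X | dist p.2 p.1 ≤ ρ} ⊆
      ({p | dist p.2 p.1 ≤ ρ} ∩ {p | T p.1 ≤ T p.2}) ∪
        Prod.swap ⁻¹' ({p | dist p.2 p.1 ≤ ρ} ∩ {p | T p.1 ≤ T p.2}) := fun p hp =>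
    (le_total (T p.1) (T p.2)).imp (fun hle => ⟨hp, hle⟩)
      fun hle => ⟨(dist_comm _ _).trans_le hp, hle⟩
  calc ∫⁻ x, ν (closedBall x ρ) ∂ν = ν.prod ν {p | dist p.2 p.1 ≤ ρ} :=
        (Measure.prod_apply hball).symm
    _ ≤ 2 * ν.prod ν ({p | dist p.2 p.1 ≤ ρ} ∩ {p | T p.1 ≤ T p.2}) := by
        refine (measure_mono hpairs).trans ((measure_union_le _ _).trans_eq ?_)
        rw [Measure.measurePreserving_swap.measure_preimage horder.nullMeasurableSet, two_mul]
    _ = _ := by rw [Measure.prod_apply horder]; rfl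

variable {E : Type*} [NormedAddCommGroup E] [NormedSpace ℝ E] [MeasurableSpace E] [BorelSpace E]
  (μ : Measure E) {A : Set E}

-- Points near `x` that exit no earlier than `x` can be carried along `h` to a point of `A` close
-- to the exit point of `x`.
lemma measure_closedBall_inter_exitTime_le [μ.IsAddRightInvariant] (hA : IsOpen A) (h : E) {x : E}
    (hx : x ∈ A) {ρ : ℝ} (hρ : 0 < ρ) :
    μ (closedBall x ρ ∩ {y | exitTime A h x ≤ exitTime A h y}) ≤
      μ (A ∩ closedBall (x + exitTime A h x • h) (2 * ρ)) := by
  set T := exitTime A h x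
  have hT : 0 < T := exitTime_pos hA hx
  obtain ⟨s, hs, hsT, hsh⟩ : ∃ s : ℝ, 0 < s ∧ s ≤ T ∧ ‖s • h‖ ≤ ρ := by
    have hsmall : ∀ᶠ s in 𝓝[>] (0 : ℝ), ‖s • h‖ ≤ ρ := by
      have hcont : Continuous fun s : ℝ => ‖s • h‖ := by fun_prop
      refine nhdsWithin_le_nhds ((hcont.tendsto 0).eventually_le_const ?_)
      simpa using hρ
    obtain ⟨s, hsh, hs⟩ := (hsmall.and (Ioc_mem_nhdsGT hT)).exists
    exact ⟨s, hs.1, hs.2, hsh⟩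
  rw [← measure_preimage_add_right μ ((T - s) • h) (A ∩ _)]
  refine measure_mono fun y ⟨hyx, hTy⟩ => ⟨?_, ?_⟩
  · exact add_smul_mem_of_lt_exitTime (by linarith) ((sub_lt_self T hs).trans_le hTy)
  · rw [mem_closedBall, dist_eq_norm] at hyx ⊢
    calc ‖y + (T - s) • h - (x + T • h)‖ = ‖(y - x) - s • h‖ := by rw [sub_smul]; congr 1; abel
      _ ≤ ‖y - x‖ + ‖s • h‖ := norm_sub_le _ _
      _ ≤ 2 * ρ := by linarith

variable [FiniteDimensional ℝ E] [μ.IsAddHaarMeasure]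

lemma measure_le_liminf_lintegral_measure_closedBall {M : Set E} {ρ : ℕ → ℝ}
    (hρ : Tendsto ρ atTop (𝓝[>] 0)) :
    μ M ≤ liminf (fun n => ∫⁻ x in M, μ.restrict M (closedBall x (ρ n)) / μ (closedBall x (ρ n)) ∂μ)
      atTop := by
  have hmeas (n : ℕ) :
      Measurable fun x => μ.restrict M (closedBall x (ρ n)) / μ (closedBall x (ρ n)) := by
    simp only [Measure.addHaar_closedBall_center μ]
    simpa only [univ_inter] using
      (measurable_measure_inter_closedBall (μ.restrict M) .univ (ρ n)).div_const _
  have hdensity : ∀ᵐ x ∂μ.restrict M, Tendsto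
      (fun n => μ.restrict M (closedBall x (ρ n)) / μ (closedBall x (ρ n))) atTop (𝓝 1) := by
    filter_upwards [Besicovitch.ae_tendsto_measure_inter_div μ M] with x hx
    simpa only [Function.comp_def, Measure.restrict_apply measurableSet_closedBall,
      inter_comm M] using hx.comp hρ
  calc μ M = ∫⁻ x in M, liminf
        (fun n => μ.restrict M (closedBall x (ρ n)) / μ (closedBall x (ρ n))) atTop ∂μ := by
        rw [← setLIntegral_one]
        exact lintegral_congr_ae (hdensity.mono fun x hx => hx.liminf_eq.symm)
    _ ≤ _ := lintegral_liminf_le hmeas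

lemma lintegral_measure_closedBall_div_le_of_exitTime (hA : IsOpen A) (h : E) {M : Set E}
    (hM : MeasurableSet M) (hMA : M ⊆ A) {ρ : ℝ} (hρ : 0 < ρ) :
    ∫⁻ x in M, μ.restrict M (closedBall x ρ) / μ (closedBall x ρ) ∂μ ≤
      2 * 2 ^ Module.finrank ℝ E * ∫⁻ x in M, μ (A ∩ closedBall (x + exitTime A h x • h) (2 * ρ)) /
        μ (closedBall (x + exitTime A h x • h) (2 * ρ)) ∂μ := by
  set D := Module.finrank ℝ E
  set b := μ (closedBall (0 : E) ρ)
  have hb₀ : b ≠ 0 := (measure_closedBall_pos μ 0 hρ).ne'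
  have hscale : b⁻¹ = 2 ^ D * (μ (closedBall (0 : E) (2 * ρ)))⁻¹ := by
    rw [Measure.addHaar_closedBall_mul μ 0 zero_le_two hρ.le, ENNReal.ofReal_pow zero_le_two,
      ENNReal.ofReal_ofNat, ENNReal.mul_inv (by simp) (by simp), ← mul_assoc,
      ENNReal.mul_inv_cancel (by simp) (by simp), one_mul]
  have hT : Measurable (exitTime A h) := (lowerSemicontinuous_exitTime hA h).measurable
  have hlater : ∫⁻ x in M, μ.restrict M (closedBall x ρ ∩ {y | exitTime A h x ≤ exitTime A h y}) ∂μ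
      ≤ ∫⁻ x in M, μ (A ∩ closedBall (x + exitTime A h x • h) (2 * ρ)) ∂μ :=
    lintegral_mono_ae ((ae_restrict_mem hM).mono fun x hx => (Measure.restrict_apply_le M _).trans
      (measure_closedBall_inter_exitTime_le μ hA h (hMA hx) hρ))
  simp only [Measure.addHaar_closedBall_center μ, div_eq_mul_inv]
  rw [lintegral_mul_const' _ _ (by simpa using hb₀), lintegral_mul_const' _ _
    (by simpa using (measure_closedBall_pos μ (0 : E) (mul_pos two_pos hρ)).ne'), hscale]
  calc (∫⁻ x in M, μ.restrict M (closedBall x ρ) ∂μ) * (2 ^ D * (μ (closedBall 0 (2 * ρ)))⁻¹)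
      ≤ 2 * (∫⁻ x in M, μ (A ∩ closedBall (x + exitTime A h x • h) (2 * ρ)) ∂μ) *
          (2 ^ D * (μ (closedBall 0 (2 * ρ)))⁻¹) := by
        gcongr
        exact (lintegral_measure_closedBall_le_two_mul _ hT ρ).trans (by gcongr)
    _ = _ := by ring

theorem measure_setOf_tendsto_exit_density_zero (hA : IsOpen A) (hAt : μ A ≠ ⊤) (h : E)
    {ρ : ℕ → ℝ} (hρ : ∀ n, 0 < ρ n) (hρ₀ : Tendsto ρ atTop (𝓝 0)) :
    μ {x ∈ A | Tendsto (fun n => μ (A ∩ closedBall (x + exitTime A h x • h) (2 * ρ n)) /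
      μ (closedBall (x + exitTime A h x • h) (2 * ρ n))) atTop (𝓝 0)} = 0 := by
  set a : ℕ → E → ℝ≥0∞ := fun n x => μ (A ∩ closedBall (x + exitTime A h x • h) (2 * ρ n)) /
      μ (closedBall (x + exitTime A h x • h) (2 * ρ n))
  set M := {x ∈ A | Tendsto (a · x) atTop (𝓝 0)}
  have hT : Measurable (exitTime A h) := (lowerSemicontinuous_exitTime hA h).measurable
  have ha (n : ℕ) : Measurable (a n) := by
    simp only [a, Measure.addHaar_closedBall_center μ]
    exact ((measurable_measure_inter_closedBall μ hA.measurableSet _).comp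
      (measurable_id.add (hT.smul_const h))).div_const _
  have hM : MeasurableSet M := hA.measurableSet.inter (measurableSet_tendsto _ ha)
  have hlim : Tendsto (fun n => ∫⁻ x in M, a n x ∂μ) atTop (𝓝 0) := by
    have hMt : μ M ≠ ⊤ := measure_ne_top_of_subset (sep_subset _ _) hAt
    have ha₁ (n : ℕ) : ∀ᵐ x ∂μ.restrict M, a n x ≤ 1 := .of_forall fun x =>
      ENNReal.div_le_of_le_mul (by simpa using measure_mono inter_subset_right)
    simpa only [lintegral_zero] using tendsto_lintegral_of_dominated_convergence _ ha ha₁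
      (by simpa using hMt) ((ae_restrict_mem hM).mono fun x hx => hx.2)
  refine le_antisymm ?_ bot_le
  calc μ M ≤ _ := measure_le_liminf_lintegral_measure_closedBall μ
        (tendsto_nhdsWithin_iff.2 ⟨hρ₀, .of_forall hρ⟩)
    _ ≤ liminf (fun n => 2 * 2 ^ Module.finrank ℝ E * ∫⁻ x in M, a n x ∂μ) atTop :=
        liminf_le_liminf (.of_forall fun n =>
          lintegral_measure_closedBall_div_le_of_exitTime μ hA h hM (sep_subset _ _) (hρ n))
    _ = 0 := by
        simpa using (ENNReal.Tendsto.const_mul hlim (Or.inr (by finiteness))).liminf_eq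

end ExitDensity

section Crossing

variable {d : ℕ} {A : Set (Euc (d + 1))}

lemma ae_mem_sweep_frontier_diff_extMeas (hA : IsOpen A) (hAt : volume A ≠ ⊤)
    (h : Euc (d + 1)) : ∀ᵐ x, x ∈ A → x + h ∉ A → x ∈ sweep h (frontier A \ extMeas A) := by
  let ρ : ℕ → ℝ := fun n => 1 / (n + 1)
  have hρ (n : ℕ) : 0 < ρ n := Nat.one_div_pos_of_nat
  have hρ₀ : Tendsto ρ atTop (𝓝 0) := tendsto_one_div_add_atTop_nhds_zero_nat
  have hρ₂ : Tendsto (fun n => 2 * ρ n) atTop (𝓝[>] 0) :=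
    tendsto_nhdsWithin_iff.2 ⟨by simpa using hρ₀.const_mul 2,
      .of_forall fun n => mul_pos two_pos (hρ n)⟩
  filter_upwards [measure_eq_zero_iff_ae_notMem.1
    (measure_setOf_tendsto_exit_density_zero volume hA hAt h hρ hρ₀)] with x hx hxA hxh
  exact ⟨exitTime A h x, ⟨exitTime_nonneg A h x, exitTime_le_one A h x⟩,
    add_exitTime_smul_mem_frontier hA hxA hxh, fun hext => hx ⟨hxA, Tendsto.comp hext hρ₂⟩⟩

lemma volume_setOf_add_mem_diff_le (hA : IsOpen A) (hAt : volume A ≠ ⊤) {X : Set (Euc (d + 1))}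
    (hX : Convex ℝ X) (h : Euc (d + 1)) :
    volume {x | x ∈ A ∩ X ∧ x + h ∈ X \ A} ≤ 3 * 2 ^ (d + 1) * volume (ball (0 : Euc (d + 1)) 1) *
      ‖h‖ₑ * μH[(d : ℝ)] ((frontier A \ extMeas A) ∩ X) := by
  rcases eq_or_ne h 0 with rfl | hh
  · simp
  refine (measure_mono_ae ?_).trans (measure_sweep_le volume (by simp) hh _)
  filter_upwards [ae_mem_sweep_frontier_diff_extMeas hA hAt h] with x hx ⟨hxA, hxh⟩
  obtain ⟨s, hs, hxs⟩ := hx hxA.1 hxh.2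
  have hxX : x + s • (x + h - x) ∈ X := hX.add_smul_sub_mem hxA.2 hxh.1 hs
  exact ⟨s, hs, hxs, by rwa [add_sub_cancel_left] at hxX⟩

lemma translationLipschitzWith_indicator (hA : IsOpen A) (hAt : volume A ≠ ⊤) :
    TranslationLipschitzWith (2 * (3 * 2 ^ (d + 1) * volume (ball (0 : Euc (d + 1)) 1) *
      μH[(d : ℝ)] (frontier A \ extMeas A))) (A.indicator (1 : Euc (d + 1) → ℝ)) volume := by
  intro h
  set c := 3 * 2 ^ (d + 1) * volume (ball (0 : Euc (d + 1)) 1)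
  have hcross (k : Euc (d + 1)) : volume {x | x ∈ A ∧ x + k ∉ A} ≤
      c * ‖k‖ₑ * μH[(d : ℝ)] (frontier A \ extMeas A) := by
    simpa using volume_setOf_add_mem_diff_le hA hAt convex_univ k
  have hreturn : volume {x | x ∉ A ∧ x + h ∈ A} = volume {x | x ∈ A ∧ x + -h ∉ A} := by
    rw [← measure_preimage_add_right volume h {x | x ∈ A ∧ x + -h ∉ A}]
    simp [preimage, and_comm]
  have hshift : MeasurableSet {x | x + h ∈ A} :=
    hA.measurableSet.preimage (measurable_add_const h)
  have hmeas : MeasurableSet ({x | x ∈ A ∧ x + h ∉ A} ∪ {x | x ∉ A ∧ x + h ∈ A}) :=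
    (hA.measurableSet.inter hshift.compl).union (hA.measurableSet.compl.inter hshift)
  calc ∫⁻ x, ‖A.indicator (1 : Euc (d + 1) → ℝ) (x + h) - A.indicator 1 x‖ₑ
      = ∫⁻ x, ({x | x ∈ A ∧ x + h ∉ A} ∪ {x | x ∉ A ∧ x + h ∈ A}).indicator 1 x := by
        refine lintegral_congr fun x => ?_
        by_cases hx : x ∈ A <;> by_cases hxh : x + h ∈ A <;> simp [hx, hxh]
    _ ≤ volume {x | x ∈ A ∧ x + h ∉ A} + volume {x | x ∉ A ∧ x + h ∈ A} := by
        rw [lintegral_indicator_one hmeas]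
        exact measure_union_le _ _
    _ ≤ c * ‖h‖ₑ * μH[(d : ℝ)] (frontier A \ extMeas A) +
          c * ‖h‖ₑ * μH[(d : ℝ)] (frontier A \ extMeas A) := by
        refine add_le_add (hcross h) (hreturn.trans_le ?_)
        simpa using hcross (-h)
    _ = _ := by ring

end Crossing

section Isoperimetric

lemma lintegral_measure_setOf_add_mem {E : Type*} [AddGroup E] [MeasurableSpace E]
    [MeasurableAdd₂ E] (μ : Measure E) [SFinite μ] [μ.IsAddLeftInvariant] {S T : Set E}
    (hS : MeasurableSet S) (hT : MeasurableSet T) :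
    ∫⁻ h, μ {x | x ∈ S ∧ x + h ∈ T} ∂μ = μ S * μ T := by
  have hpairs : MeasurableSet {p : E × E | p.2 ∈ S ∧ p.2 + p.1 ∈ T} :=
    (hS.preimage measurable_snd).inter (hT.preimage (measurable_snd.add measurable_fst))
  have hslice (x : E) : μ ((·, x) ⁻¹' {p : E × E | p.2 ∈ S ∧ p.2 + p.1 ∈ T}) =
      S.indicator (fun _ => μ T) x := by
    by_cases hx : x ∈ S
    · simpa [hx, preimage] using measure_preimage_add μ x T
    · simp [hx]
  calc ∫⁻ h, μ {x | x ∈ S ∧ x + h ∈ T} ∂μ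
      = μ.prod μ {p : E × E | p.2 ∈ S ∧ p.2 + p.1 ∈ T} := (Measure.prod_apply hpairs).symm
    _ = μ S * μ T := by
        rw [Measure.prod_apply_symm hpairs, lintegral_congr hslice,
          lintegral_indicator_const hS, mul_comm]

variable {d : ℕ} {A : Set (Euc (d + 1))}

lemma volume_inter_ball_mul_volume_ball_diff_le (hA : IsOpen A) (hAt : volume A ≠ ⊤)
    (c : Euc (d + 1)) (r : ℝ) :
    volume (A ∩ ball c r) * volume (ball c r \ A) ≤
      3 * 2 ^ (d + 1) * volume (ball (0 : Euc (d + 1)) 1) * ENNReal.ofReal (2 * r) *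
        μH[(d : ℝ)] ((frontier A \ extMeas A) ∩ ball c r) *
          volume (ball (0 : Euc (d + 1)) (2 * r)) := by
  rw [← lintegral_measure_setOf_add_mem volume (hA.measurableSet.inter measurableSet_ball)
    (measurableSet_ball.diff hA.measurableSet), ← lintegral_indicator_const measurableSet_ball]
  refine lintegral_mono fun h => ?_
  by_cases hh : h ∈ ball (0 : Euc (d + 1)) (2 * r)
  · rw [indicator_of_mem hh]
    refine (volume_setOf_add_mem_diff_le hA hAt (convex_ball c r) h).trans ?_
    gcongr
    rw [← ofReal_norm]
    exact ENNReal.ofReal_le_ofReal (mem_ball_zero_iff.1 hh).le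
  · have hempty : {x | x ∈ A ∩ ball c r ∧ x + h ∈ ball c r \ A} = ∅ := by
      refine eq_empty_of_forall_notMem fun x ⟨hx, hxh⟩ => hh ?_
      rw [mem_ball_zero_iff, ← add_sub_cancel_left x h, ← dist_eq_norm]
      linarith [dist_triangle_right (x + h) x c, mem_ball.1 hx.2, mem_ball.1 hxh.1]
    rw [hempty, measure_empty]
    exact zero_le

theorem exists_ofReal_pow_le_mul_hausdorffMeasure (d : ℕ) {η : ℝ≥0∞} (hη : η ≠ 0) (hηt : η ≠ ⊤) :
    ∃ C : ℝ≥0∞, C ≠ ⊤ ∧ ∀ {A : Set (Euc (d + 1))}, IsOpen A → volume A ≠ ⊤ →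
      ∀ (c : Euc (d + 1)) {r : ℝ}, 0 < r → η * volume (ball c r) ≤ volume (A ∩ ball c r) →
        η * volume (ball c r) ≤ volume (ball c r \ A) →
          ENNReal.ofReal r ^ d ≤ C * μH[(d : ℝ)] ((frontier A \ extMeas A) ∩ ball c r) := by
  refine ⟨(η * η)⁻¹ * (3 * 2 ^ (d + 1) * 2 * 2 ^ (d + 1)), ?_, fun {A} hA hAt c r hr hin hout => ?_⟩
  · exact ENNReal.mul_ne_top (ENNReal.inv_ne_top.2 (mul_ne_zero hη hη)) (by finiteness)
  set ω := volume (ball (0 : Euc (d + 1)) 1)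
  have hω₀ : ω ≠ 0 := (measure_ball_pos volume _ one_pos).ne'
  have hωt : ω ≠ ⊤ := measure_ball_lt_top.ne
  set H := μH[(d : ℝ)] ((frontier A \ extMeas A) ∩ ball c r)
  set R := ENNReal.ofReal r
  have hR₀ : R ≠ 0 := by simpa [R] using hr
  have hRt : R ≠ ⊤ := ENNReal.ofReal_ne_top
  have hball : volume (ball c r) = R ^ (d + 1) * ω := by
    rw [Measure.addHaar_ball _ _ hr.le, finrank_euclideanSpace_fin, ENNReal.ofReal_pow hr.le]
  have hball₂ : volume (ball (0 : Euc (d + 1)) (2 * r)) = (2 * R) ^ (d + 1) * ω := by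
    rw [Measure.addHaar_ball _ _ (by positivity), finrank_euclideanSpace_fin,
      ENNReal.ofReal_pow (by positivity), ENNReal.ofReal_mul zero_le_two, ENNReal.ofReal_ofNat]
  have hprod := (mul_le_mul' hin hout).trans (volume_inter_ball_mul_volume_ball_diff_le hA hAt c r)
  rw [hball, hball₂, ENNReal.ofReal_mul zero_le_two, ENNReal.ofReal_ofNat] at hprod
  have hcancel : η * η * R ^ d ≤ 3 * 2 ^ (d + 1) * 2 * 2 ^ (d + 1) * H := by
    rw [← ENNReal.mul_le_mul_iff_right (mul_ne_zero (pow_ne_zero (d + 2) hR₀) (pow_ne_zero 2 hω₀))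
      (by finiteness)]
    calc R ^ (d + 2) * ω ^ 2 * (η * η * R ^ d)
        = η * (R ^ (d + 1) * ω) * (η * (R ^ (d + 1) * ω)) := by ring
      _ ≤ _ := hprod
      _ = _ := by ring
  rwa [mul_assoc, ← ENNReal.inv_mul_le_iff (ENNReal.inv_ne_zero.2 (by finiteness))
    (ENNReal.inv_ne_top.2 (mul_ne_zero hη hη)), inv_inv]

end Isoperimetric

section DensityScale

variable {E : Type*} [NormedAddCommGroup E] [NormedSpace ℝ E] [FiniteDimensional ℝ E]
  [MeasurableSpace E] [BorelSpace E] (μ : Measure E) [μ.IsAddHaarMeasure] {A : Set E} {x : E}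
  {θ : ℝ≥0∞}

lemma measure_ball_eq_two_pow_mul_measure_ball_half (x : E) {r : ℝ} (hr : 0 < r) :
    μ (ball x r) = 2 ^ Module.finrank ℝ E * μ (ball x (r / 2)) := by
  rw [Measure.addHaar_ball_of_pos μ x hr, Measure.addHaar_ball_of_pos μ x (half_pos hr),
    ENNReal.ofReal_pow hr.le, ENNReal.ofReal_pow (half_pos hr).le, ← mul_assoc, ← mul_pow,
    ← ENNReal.ofReal_ofNat 2, ← ENNReal.ofReal_mul zero_le_two, mul_div_cancel₀ r two_ne_zero]

lemma le_measure_ball_inter_half_or_le_measure_ball_diff (hA : MeasurableSet A)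
    (hθ : θ * 2 ^ Module.finrank ℝ E + θ ≤ 1) {r : ℝ} (hr : 0 < r) :
    θ * μ (ball x (r / 2)) ≤ μ (A ∩ ball x (r / 2)) ∨ θ * μ (ball x r) ≤ μ (ball x r \ A) := by
  refine or_iff_not_imp_left.2 fun hlt => ?_
  set b := μ (ball x (r / 2))
  have hθt : θ ≠ ⊤ := ne_top_of_le_ne_top ENNReal.one_ne_top (le_add_self.trans hθ)
  have hsplit : θ * 2 ^ Module.finrank ℝ E * b + θ * b ≤ μ (ball x (r / 2) \ A) + θ * b := calc
    θ * 2 ^ Module.finrank ℝ E * b + θ * b ≤ 1 * b := by rw [← add_mul]; gcongr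
    _ = μ (ball x (r / 2) ∩ A) + μ (ball x (r / 2) \ A) := by
      rw [one_mul, measure_inter_add_sdiff _ hA]
    _ ≤ _ := by
      rw [inter_comm, add_comm]
      gcongr
      exact (not_le.1 hlt).le
  calc θ * μ (ball x r) = θ * 2 ^ Module.finrank ℝ E * b := by
        rw [measure_ball_eq_two_pow_mul_measure_ball_half μ x hr, mul_assoc]
    _ ≤ μ (ball x (r / 2) \ A) :=
        (ENNReal.add_le_add_iff_right (ENNReal.mul_ne_top hθt measure_ball_lt_top.ne)).1 hsplit
    _ ≤ _ := measure_mono (sdiff_subset_sdiff_left (ball_subset_ball (half_le_self hr.le)))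

lemma exists_radius_le_measure_ball_inter_and_diff (hA : MeasurableSet A)
    (hx : Tendsto (fun r => μ (A ∩ closedBall x r) / μ (closedBall x r)) (𝓝[>] 0) (𝓝 0))
    (hθ₀ : θ ≠ 0) (hθ : θ * 2 ^ Module.finrank ℝ E + θ ≤ 1) {δ : ℝ} (hδ : 0 < δ)
    (hδx : θ * μ (ball x δ) ≤ μ (A ∩ ball x δ)) :
    ∃ r, 0 < r ∧ r ≤ δ ∧ θ * μ (ball x r) ≤ μ (A ∩ ball x r) ∧
      θ * μ (ball x r) ≤ μ (ball x r \ A) := by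
  by_contra! hcon
  let ρ : ℕ → ℝ := fun n => δ / 2 ^ n
  have hρ (n : ℕ) : 0 < ρ n := by positivity
  have hρδ (n : ℕ) : ρ n ≤ δ := div_le_self hδ.le (one_le_pow₀ one_le_two)
  have hdense (n : ℕ) : θ * μ (ball x (ρ n)) ≤ μ (A ∩ ball x (ρ n)) := by
    induction n with
    | zero => simpa [ρ] using hδx
    | succ n ih =>
      have hhalf : ρ (n + 1) = ρ n / 2 := by simp only [ρ, pow_succ, div_div]
      rw [hhalf]
      exact (le_measure_ball_inter_half_or_le_measure_ball_diff μ hA hθ (hρ n)).resolve_right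
        (hcon _ (hρ n) (hρδ n) ih).not_ge
  have hρ₀ : Tendsto ρ atTop (𝓝[>] 0) :=
    tendsto_nhdsWithin_iff.2 ⟨tendsto_const_nhds.div_atTop
      (tendsto_pow_atTop_atTop_of_one_lt one_lt_two), .of_forall hρ⟩
  obtain ⟨n, hn⟩ := ((hx.comp hρ₀).eventually_lt_const (pos_iff_ne_zero.2 hθ₀)).exists
  have hball : μ (closedBall x (ρ n)) = μ (ball x (ρ n)) := by
    rw [Measure.addHaar_closedBall μ x (hρ n).le, Measure.addHaar_ball_of_pos μ x (hρ n)]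
  rw [Function.comp_apply, hball, ENNReal.div_lt_iff (.inl (measure_ball_pos μ x (hρ n)).ne')
    (.inl measure_ball_lt_top.ne)] at hn
  exact hn.not_ge ((hdense n).trans (measure_mono (by gcongr; exact ball_subset_closedBall)))

lemma isBounded_setOf_le_measure_inter_ball (hA : MeasurableSet A) (hAt : μ A ≠ ⊤) (hθ₀ : θ ≠ 0)
    {δ : ℝ} (hδ : 0 < δ) :
    Bornology.IsBounded {x | θ * μ (ball x δ) ≤ μ (A ∩ ball x δ)} := by
  have hpos : θ * μ (ball 0 δ) ≠ 0 := mul_ne_zero hθ₀ (measure_ball_pos μ 0 hδ).ne'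
  obtain ⟨L, -, hL, hAL⟩ := hA.exists_isCompact_sdiff_lt hAt hpos
  refine hL.isBounded.thickening (δ := δ) |>.subset fun x hx => ?_
  by_contra hfar
  have hsub : A ∩ ball x δ ⊆ A \ L := fun y ⟨hyA, hyx⟩ =>
    ⟨hyA, fun hyL => hfar (mem_thickening_iff.2 ⟨y, hyL, by rwa [dist_comm]⟩)⟩
  rw [mem_ofPred_eq, Measure.addHaar_ball_center] at hx
  exact ((measure_mono hsub).trans_lt hAL).not_ge hx

end DensityScale

section BadSetCover

lemma exists_countable_ball_cover_tsum_le {X : Type*} [MetricSpace X] [SecondCountableTopology X]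
    [MeasurableSpace X] [BorelSpace X] (ν : Measure X) {S : Set X} {ρ : X → ℝ} {δ : ℝ}
    (hρ : ∀ x ∈ S, 0 < ρ x ∧ ρ x ≤ δ) {g : X → ℝ≥0∞} (hg : ∀ x ∈ S, g x ≤ ν (ball x (ρ x))) :
    ∃ u ⊆ S, u.Countable ∧ S ⊆ ⋃ x ∈ u, ball x (5 * ρ x) ∧ ∑' x : u, g x ≤ ν univ := by
  obtain ⟨u, huS, hdisj, hcov⟩ := Vitali.exists_disjoint_subfamily_covering_enlargement_ball
    S id ρ δ (fun x hx => (hρ x hx).2) 5 (by norm_num)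
  have hcount : u.Countable := hdisj.countable_of_isOpen (fun _ _ => isOpen_ball)
    fun x hx => ⟨x, mem_ball_self (hρ x (huS hx)).1⟩
  refine ⟨u, huS, hcount, fun x hx => ?_, ?_⟩
  · obtain ⟨y, hy, hxy⟩ := hcov x hx
    exact mem_iUnion₂.2 ⟨y, hy, hxy (mem_ball_self (hρ x hx).1)⟩
  · have := hcount.to_subtype
    calc ∑' x : u, g x ≤ ∑' x : u, ν (ball (x : X) (ρ x)) :=
          ENNReal.tsum_le_tsum fun x => hg x (huS x.2)
      _ = ν (⋃ x : u, ball (x : X) (ρ x)) :=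
          (measure_iUnion (fun (x y : u) hxy => hdisj x.2 y.2 (Subtype.coe_injective.ne hxy))
            fun _ => measurableSet_ball).symm
      _ ≤ ν univ := measure_mono (subset_univ _)

lemma mem_extMeas_of_notMem_closure {m : ℕ} {A : Set (Euc m)} {x : Euc m} (hx : x ∉ closure A) :
    x ∈ extMeas A := by
  obtain ⟨ε, hε, hball⟩ := Metric.isOpen_iff.1 isClosed_closure.isOpen_compl x hx
  refine tendsto_const_nhds.congr' ?_
  filter_upwards [Ioo_mem_nhdsGT hε] with r hr
  have hempty : A ∩ closedBall x r = ∅ := eq_empty_of_forall_notMem fun y ⟨hyA, hyx⟩ =>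
    hball (closedBall_subset_ball hr.2 hyx) (subset_closure hyA)
  simp [hempty]

variable {d : ℕ} {A : Set (Euc (d + 1))} {θ : ℝ≥0∞}

lemma exists_countable_ball_cover_of_subset_extMeas (hA : IsOpen A) (hAt : volume A ≠ ⊤)
    (hθ₀ : θ ≠ 0) (hθ : θ * 2 ^ (d + 1) + θ ≤ 1) :
    ∃ C : ℝ≥0∞, C ≠ ⊤ ∧ ∀ {δ : ℝ} {S : Set (Euc (d + 1))}, 0 < δ → S ⊆ extMeas A →
      (∀ x ∈ S, θ * volume (ball x δ) ≤ volume (A ∩ ball x δ)) →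
      ∃ (ι : Type) (_ : Countable ι) (x : ι → Euc (d + 1)) (r : ι → ℝ),
        (∀ i, 0 < r i ∧ r i ≤ 5 * δ) ∧ S ⊆ ⋃ i, ball (x i) (r i) ∧
          ∑' i, ENNReal.ofReal (r i) ^ d ≤ C * μH[(d : ℝ)] (frontier A \ extMeas A) := by
  have hθt : θ ≠ ⊤ := ne_top_of_le_ne_top ENNReal.one_ne_top (le_add_self.trans hθ)
  obtain ⟨C, hC, hiso⟩ := exists_ofReal_pow_le_mul_hausdorffMeasure d hθ₀ hθt
  refine ⟨5 ^ d * C, by finiteness, fun {δ S} hδ hS hdense => ?_⟩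
  have hscale : ∀ x ∈ S, ∃ r, (0 < r ∧ r ≤ δ) ∧ ENNReal.ofReal r ^ d ≤
      (C • (μH[(d : ℝ)]).restrict (frontier A \ extMeas A)) (ball x r) := fun x hx => by
    obtain ⟨r, hr, hrδ, hin, hout⟩ := exists_radius_le_measure_ball_inter_and_diff volume
      hA.measurableSet (hS hx) hθ₀ (by simpa using hθ) hδ (hdense x hx)
    refine ⟨r, ⟨hr, hrδ⟩, ?_⟩
    rw [Measure.smul_apply, smul_eq_mul, Measure.restrict_apply measurableSet_ball, inter_comm]
    exact hiso hA hAt x hr hin hout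
  choose! ρ hρ hρC using hscale
  obtain ⟨u, huS, hu, hcov, hsum⟩ := exists_countable_ball_cover_tsum_le _ hρ hρC
  refine ⟨u, hu.to_subtype, (↑), fun x => 5 * ρ x, fun x => ?_,
    hcov.trans_eq (biUnion_eq_iUnion _ _), ?_⟩
  · have := hρ x (huS x.2)
    constructor <;> linarith
  · simp only [ENNReal.ofReal_mul (show (0 : ℝ) ≤ 5 by norm_num), ENNReal.ofReal_ofNat, mul_pow]
    rw [ENNReal.tsum_mul_left, mul_assoc]
    gcongr
    simpa using hsum

theorem exists_finite_ball_cover_of_density (hA : IsOpen A) (hAt : volume A ≠ ⊤)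
    (hK : μH[(d : ℝ)] (frontier A \ extMeas A) ≠ ⊤) (hθ₀ : θ ≠ 0) (hθ : θ * 2 ^ (d + 1) + θ ≤ 1) :
    ∃ C : ℝ≥0∞, C ≠ ⊤ ∧ ∀ {δ : ℝ} {S : Set (Euc (d + 1))}, 0 < δ → IsCompact S → Disjoint S A →
      (∀ x ∈ S, θ * volume (ball x δ) ≤ volume (A ∩ ball x δ)) →
      ∃ (ι : Type) (t : Finset ι) (x : ι → Euc (d + 1)) (r : ι → ℝ),
        (∀ i, 0 < r i ∧ r i ≤ 5 * δ) ∧ S ⊆ ⋃ i ∈ t, ball (x i) (r i) ∧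
          ∑ i ∈ t, ENNReal.ofReal (r i) ^ d ≤ C := by
  set K := frontier A \ extMeas A
  obtain ⟨C, hC, hext⟩ := exists_countable_ball_cover_of_subset_extMeas hA hAt hθ₀ hθ
  refine ⟨μH[(d : ℝ)] K + 1 + C * μH[(d : ℝ)] K, by finiteness, fun {δ S} hδ hS hSA hdense => ?_⟩
  obtain ⟨ι, -, x, r, hr, hcov, hsum⟩ := exists_ball_cover_of_hausdorffMeasure_lt d.cast_nonneg
    (ENNReal.lt_add_right hK one_ne_zero) (show 0 < 5 * δ by positivity)
  have hSK : S \ K ⊆ extMeas A := fun z ⟨hzS, hzK⟩ => by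
    by_contra hz
    have hcl : z ∈ closure A := by_contra fun hcl => hz (mem_extMeas_of_notMem_closure hcl)
    exact hzK ⟨hA.frontier_eq ▸ ⟨hcl, hSA.notMem_of_mem_left hzS⟩, hz⟩
  obtain ⟨κ, -, y, s, hs, hcov', hsum'⟩ := hext hδ hSK fun z hz => hdense z hz.1
  obtain ⟨t, ht⟩ := hS.elim_finite_subcover (fun i => ball (Sum.elim x y i) (Sum.elim r s i))
    (fun _ => isOpen_ball) fun z hz => by
      rw [iUnion_sum]
      by_cases hzK : z ∈ K
      exacts [Or.inl (hcov hzK), Or.inr (hcov' ⟨hz, hzK⟩)]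
  refine ⟨ι ⊕ κ, t, Sum.elim x y, Sum.elim r s, Sum.forall.2 ⟨hr, hs⟩, ht, ?_⟩
  rw [Finset.sum_sum_eq_sum_toLeft_add_sum_toRight]
  refine add_le_add ((ENNReal.sum_le_tsum _).trans ?_) ((ENNReal.sum_le_tsum _).trans hsum')
  simpa only [Sum.elim_inl, ENNReal.rpow_natCast] using hsum

end BadSetCover

section SmoothedIndicator

open scoped Convolution

variable {E : Type*} [NormedAddCommGroup E] [NormedSpace ℝ E] [HasContDiffBump E]
  [FiniteDimensional ℝ E] [MeasurableSpace E] [BorelSpace E] {μ : Measure E} [μ.IsAddHaarMeasure]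
  {φ : ContDiffBump (0 : E)} {A : Set E} {x : E}

/-- The mollification of the indicator function of `A` by the normalized bump function `φ`. -/
def smoothedIndicator (φ : ContDiffBump (0 : E)) (A : Set E) (μ : Measure E) : E → ℝ :=
  φ.normed μ ⋆[.lsmul ℝ ℝ, μ] A.indicator 1

lemma contDiff_smoothedIndicator (hA : MeasurableSet A) :
    ContDiff ℝ (⊤ : ℕ∞) (smoothedIndicator φ A μ) :=
  φ.hasCompactSupport_normed.contDiff_convolution_left _ φ.contDiff_normed
    ((locallyIntegrable_const 1).indicator hA)

lemma smoothedIndicator_mem_Icc (hA : MeasurableSet A) (x : E) :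
    smoothedIndicator φ A μ x ∈ Icc (0 : ℝ) 1 := by
  have hhalf : dist (smoothedIndicator φ A μ x) (1 / 2) ≤ 1 / 2 := by
    refine dist_convolution_le (by norm_num) φ.support_normed_eq.subset φ.nonneg_normed
      φ.integral_normed (measurable_const.indicator hA).aestronglyMeasurable fun y _ => ?_
    by_cases hy : y ∈ A <;> norm_num [hy, Real.dist_eq]
  rw [Real.dist_eq, abs_le] at hhalf
  constructor <;> linarith

lemma smoothedIndicator_eq_one (hx : ball x φ.rOut ⊆ A) : smoothedIndicator φ A μ x = 1 := by
  have hxA : x ∈ A := hx (mem_ball_self φ.rOut_pos)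
  simpa [hxA, smoothedIndicator] using φ.normed_convolution_eq_right (x₀ := x) (μ := μ)
    (g := A.indicator (1 : E → ℝ)) fun y hy => by simp [hx hy, hxA]

lemma smoothedIndicator_le_measureReal_div (hA : MeasurableSet A) (x : E) :
    smoothedIndicator φ A μ x ≤ μ.real (A ∩ ball x φ.rOut) / μ.real (closedBall 0 φ.rIn) := by
  have hbound (t : E) : φ.normed μ (x - t) * A.indicator 1 t ≤
      (A ∩ ball x φ.rOut).indicator (fun _ => 1 / μ.real (closedBall (0 : E) φ.rIn)) t := by
    by_cases htA : t ∈ A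
    · by_cases htx : t ∈ ball x φ.rOut
      · simpa [htA, htx] using φ.normed_le_div_measure_closedBall_rIn μ (x - t)
      · have hzero : φ.normed μ (x - t) = 0 := by
          rw [← Function.notMem_support, φ.support_normed_eq, mem_ball_zero_iff, ← dist_eq_norm,
            dist_comm]
          exact htx
        simp [hzero, htx]
    · simp [htA]
  have hint : Integrable (fun t => φ.normed μ (x - t) * A.indicator 1 t) μ := by
    refine (((φ.integrable_normed (μ := μ)).comp_sub_left x).indicator hA).congr
      (.of_forall fun t => ?_)
    by_cases ht : t ∈ A <;> simp [ht]
  have hball : MeasurableSet (A ∩ ball x φ.rOut) := hA.inter measurableSet_ball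
  calc smoothedIndicator φ A μ x = ∫ t, φ.normed μ (x - t) * A.indicator 1 t ∂μ :=
        convolution_eq_swap (μ := μ) _
    _ ≤ ∫ t, (A ∩ ball x φ.rOut).indicator (fun _ => 1 / μ.real (closedBall (0 : E) φ.rIn)) t ∂μ :=
        integral_mono hint ((integrable_indicator_iff hball).2 (integrableOn_const
          (measure_ne_top_of_subset inter_subset_right measure_ball_lt_top.ne))) hbound
    _ = _ := by
        rw [integral_indicator_const _ hball, smul_eq_mul, mul_one_div]

lemma le_measure_inter_ball_of_third_le_smoothedIndicator (hA : MeasurableSet A)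
    (hφ : φ.rOut = 2 * φ.rIn) (hx : 1 / 3 ≤ smoothedIndicator φ A μ x) :
    (3 * 2 ^ Module.finrank ℝ E)⁻¹ * μ (ball x φ.rOut) ≤ μ (A ∩ ball x φ.rOut) := by
  have hr : 0 < φ.rIn := φ.rIn_pos
  have hball : μ (ball x φ.rOut) = 2 ^ Module.finrank ℝ E * μ (closedBall 0 φ.rIn) := by
    rw [measure_ball_eq_two_pow_mul_measure_ball_half μ x φ.rOut_pos, hφ,
      mul_div_cancel_left₀ _ two_ne_zero, Measure.addHaar_ball_of_pos μ _ hr,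
      Measure.addHaar_closedBall μ _ hr.le]
  have hclosed : 0 < μ.real (closedBall (0 : E) φ.rIn) :=
    ENNReal.toReal_pos (measure_closedBall_pos μ 0 hr).ne' measure_closedBall_lt_top.ne
  have hreal : μ.real (closedBall (0 : E) φ.rIn) ≤ 3 * μ.real (A ∩ ball x φ.rOut) := by
    have := hx.trans (smoothedIndicator_le_measureReal_div hA x)
    rw [le_div_iff₀ hclosed] at this
    linarith
  have hthird : μ (closedBall (0 : E) φ.rIn) ≤ 3 * μ (A ∩ ball x φ.rOut) := by
    have hfin : μ (A ∩ ball x φ.rOut) ≠ ⊤ :=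
      measure_ne_top_of_subset inter_subset_right measure_ball_lt_top.ne
    rw [← ENNReal.toReal_le_toReal measure_closedBall_lt_top.ne (by finiteness),
      ENNReal.toReal_mul]
    exact hreal
  rw [ENNReal.inv_mul_le_iff (by positivity) (by finiteness), hball]
  calc _ ≤ 2 ^ Module.finrank ℝ E * (3 * μ (A ∩ ball x φ.rOut)) := by gcongr
    _ = _ := by ring

lemma TranslationLipschitzWith.smoothedIndicator {C : ℝ≥0∞} (hA : MeasurableSet A)
    (hC : TranslationLipschitzWith C (A.indicator (1 : E → ℝ)) μ) :
    TranslationLipschitzWith C (smoothedIndicator φ A μ) μ := by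
  have hmass : ∫⁻ t, ‖φ.normed μ t‖ₑ ∂μ = 1 := by
    simp only [Real.enorm_of_nonneg (φ.nonneg_normed (μ := μ) _)]
    rw [← ofReal_integral_eq_lintegral_ofReal φ.integrable_normed
      (.of_forall φ.nonneg_normed), φ.integral_normed, ENNReal.ofReal_one]
  have hconv := TranslationLipschitzWith.convolution (φ.continuous_normed (μ := μ))
    φ.hasCompactSupport_normed ((locallyIntegrable_const 1).indicator hA)
    (measurable_const.indicator hA).stronglyMeasurable hC
  rwa [hmass, one_mul] at hconv

end SmoothedIndicator

section BallCutoff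

variable {E : Type*} [NormedAddCommGroup E] [NormedSpace ℝ E] [HasContDiffBump E]

/-- A smooth function that vanishes on `ball c r`, equals `1` outside `ball c (2 * r)` and takes
values in `[0, 1]`; it is scaled from a single bump function, so that its Lipschitz constant is
inversely proportional to `r`. -/
def ballCutoff (c : E) (r : ℝ) (x : E) : ℝ :=
  1 - (⟨1, 2, one_pos, one_lt_two⟩ : ContDiffBump (0 : E)) (r⁻¹ • (x - c))

lemma contDiff_ballCutoff (c : E) (r : ℝ) : ContDiff ℝ (⊤ : ℕ∞) (ballCutoff c r) :=
  contDiff_const.sub (ContDiffBump.contDiff _ |>.comp (by fun_prop))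

lemma ballCutoff_mem_Icc (c : E) (r : ℝ) (x : E) : ballCutoff c r x ∈ Icc (0 : ℝ) 1 :=
  ⟨sub_nonneg.2 (ContDiffBump.le_one _), sub_le_self _ (ContDiffBump.nonneg _)⟩

lemma ballCutoff_eq_zero {c x : E} {r : ℝ} (hx : x ∈ ball c r) : ballCutoff c r x = 0 := by
  have hr : 0 < r := dist_nonneg.trans_lt hx
  rw [ballCutoff, ContDiffBump.one_of_mem_closedBall, sub_self]
  rw [mem_closedBall_zero_iff, norm_smul, norm_inv, Real.norm_of_nonneg hr.le, ← dist_eq_norm,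
    inv_mul_le_iff₀ hr, mul_one]
  exact (mem_ball.1 hx).le

lemma ballCutoff_eq_one {c x : E} {r : ℝ} (hr : 0 < r) (hx : x ∉ ball c (2 * r)) :
    ballCutoff c r x = 1 := by
  rw [ballCutoff, ContDiffBump.zero_of_le_dist, sub_zero]
  rw [mem_ball, not_lt, dist_eq_norm, mul_comm] at hx
  rwa [dist_zero_right, norm_smul, norm_inv, Real.norm_of_nonneg hr.le, le_inv_mul_iff₀ hr]

lemma exists_translationLipschitzWith_ballCutoff [FiniteDimensional ℝ E] [MeasurableSpace E]
    [BorelSpace E] (μ : Measure E) [μ.IsAddHaarMeasure] {d : ℕ}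
    (hd : Module.finrank ℝ E = d + 1) :
    ∃ L : ℝ≥0∞, L ≠ ⊤ ∧ ∀ (c : E) {r : ℝ}, 0 < r →
      TranslationLipschitzWith (L * ENNReal.ofReal r ^ d) (ballCutoff c r) μ := by
  let ψ : ContDiffBump (0 : E) := ⟨1, 2, one_pos, one_lt_two⟩
  obtain ⟨K, hK⟩ := (ψ.contDiff (n := 1)).lipschitzWith_of_hasCompactSupport ψ.hasCompactSupport
    one_ne_zero
  refine ⟨2 * K * 2 ^ (d + 1) * μ (ball 0 1), ?_, fun c r hr => ?_⟩
  · have := (measure_ball_lt_top (μ := μ) (x := (0 : E)) (r := 1)).ne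
    finiteness
  have hscale : LipschitzWith (K * r⁻¹.toNNReal) fun x => ψ (r⁻¹ • (x - c)) := by
    refine hK.comp (LipschitzWith.of_dist_le_mul fun x y => ?_)
    rw [dist_smul₀, dist_sub_right, Real.coe_toNNReal _ (by positivity),
      Real.norm_of_nonneg (by positivity)]
  have hsupp : Function.support (fun x => ψ (r⁻¹ • (x - c))) ⊆ ball c (2 * r) := fun x hx => by
    by_contra hfar
    exact hx (by simpa [ballCutoff, sub_eq_iff_eq_add] using ballCutoff_eq_one hr hfar)
  refine ((TranslationLipschitzWith.of_lipschitzWith (μ := μ) hscale hsupp).const_sub 1).mono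
    (le_of_eq ?_)
  have hR₀ : ENNReal.ofReal r ≠ 0 := by simpa using hr
  rw [Measure.addHaar_ball_of_pos μ _ (by positivity), hd, ENNReal.coe_mul,
    ENNReal.ofReal_pow (by positivity), ENNReal.ofReal_mul zero_le_two, ENNReal.ofReal_ofNat]
  change 2 * (K * ENNReal.ofReal r⁻¹) * ((2 * ENNReal.ofReal r) ^ (d + 1) * μ (ball 0 1)) = _
  rw [ENNReal.ofReal_inv_of_pos hr]
  calc _ = 2 * K * 2 ^ (d + 1) * μ (ball 0 1) * ENNReal.ofReal r ^ d *
        ((ENNReal.ofReal r)⁻¹ * ENNReal.ofReal r) := by ring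
    _ = _ := by rw [ENNReal.inv_mul_cancel hR₀ ENNReal.ofReal_ne_top, mul_one]

end BallCutoff

section Approximation

variable {E : Type*} [NormedAddCommGroup E] [NormedSpace ℝ E] [FiniteDimensional ℝ E]
  [MeasurableSpace E] [BorelSpace E] (μ : Measure E) [μ.IsAddHaarMeasure] {d : ℕ}

lemma exists_smoothing [HasContDiffBump E] {A : Set E} (hA : IsOpen A) (hAt : μ A ≠ ⊤) {C : ℝ≥0∞}
    (hC : TranslationLipschitzWith C (A.indicator (1 : E → ℝ)) μ) {ε : ℝ≥0∞} (hε : ε ≠ 0) {R : ℝ}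
    (hR : 0 < R) :
    ∃ δ, 0 < δ ∧ δ ≤ R ∧ ∃ u : E → ℝ, ContDiff ℝ (⊤ : ℕ∞) u ∧ TranslationLipschitzWith C u μ ∧
      (∀ x, u x ∈ Icc (0 : ℝ) 1) ∧
      (∀ x, 1 / 3 ≤ u x →
        (3 * 2 ^ Module.finrank ℝ E)⁻¹ * μ (ball x δ) ≤ μ (A ∩ ball x δ)) ∧
      μ (A \ {x | u x = 1}) ≤ ε := by
  obtain ⟨L, hLA, hL, hAL⟩ := hA.measurableSet.exists_isCompact_sdiff_lt hAt hε
  obtain ⟨δ, hδ, hthick⟩ := hL.exists_thickening_subset_open hA hLA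
  have hδR : 0 < min δ R := lt_min hδ hR
  let φ : ContDiffBump (0 : E) := ⟨min δ R / 2, min δ R, half_pos hδR, half_lt_self hδR⟩
  refine ⟨min δ R, hδR, min_le_right _ _, smoothedIndicator φ A μ,
    contDiff_smoothedIndicator hA.measurableSet, hC.smoothedIndicator hA.measurableSet,
    smoothedIndicator_mem_Icc hA.measurableSet, fun x hx =>
    le_measure_inter_ball_of_third_le_smoothedIndicator hA.measurableSet
      (mul_div_cancel₀ _ two_ne_zero).symm hx, (measure_mono ?_).trans hAL.le⟩
  refine sdiff_subset_sdiff_right fun x hx => smoothedIndicator_eq_one ?_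
  exact ((ball_subset_ball (min_le_left _ _)).trans (ball_subset_thickening hx δ)).trans hthick

lemma exists_cutoff_biUnion_ball [HasContDiffBump E] (hd : Module.finrank ℝ E = d + 1) :
    ∃ L : ℝ≥0∞, L ≠ ⊤ ∧ ∀ {ι : Type} (t : Finset ι) (c : ι → E) {r : ι → ℝ}, (∀ i, 0 < r i) →
      ∃ w : E → ℝ, ContDiff ℝ (⊤ : ℕ∞) w ∧ (∀ x, w x ∈ Icc (0 : ℝ) 1) ∧
        TranslationLipschitzWith (L * ∑ i ∈ t, ENNReal.ofReal (r i) ^ d) w μ ∧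
        (∀ x ∈ ⋃ i ∈ t, ball (c i) (r i), w x = 0) ∧
        ∀ x ∉ ⋃ i ∈ t, ball (c i) (2 * r i), w x = 1 := by
  obtain ⟨L, hL, hcutoff⟩ := exists_translationLipschitzWith_ballCutoff μ hd
  refine ⟨L, hL, fun t c r hr => ⟨fun x => ∏ i ∈ t, ballCutoff (c i) (r i) x,
    contDiff_prod fun i _ => contDiff_ballCutoff _ _, fun x =>
      ⟨Finset.prod_nonneg fun i _ => (ballCutoff_mem_Icc _ _ x).1,
        Finset.prod_le_one (fun i _ => (ballCutoff_mem_Icc _ _ x).1)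
          fun i _ => (ballCutoff_mem_Icc _ _ x).2⟩, ?_, fun x hx => ?_, fun x hx => ?_⟩⟩
  · rw [Finset.mul_sum]
    refine TranslationLipschitzWith.prod t
      (fun i => (contDiff_ballCutoff (c i) (r i)).continuous.measurable) (fun i x => ?_)
      fun i _ => hcutoff (c i) (hr i)
    rw [Real.norm_of_nonneg (ballCutoff_mem_Icc _ _ x).1]
    exact (ballCutoff_mem_Icc _ _ x).2
  · obtain ⟨i, hi, hxi⟩ := mem_iUnion₂.1 hx
    exact Finset.prod_eq_zero hi (ballCutoff_eq_zero hxi)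
  · exact Finset.prod_eq_one fun i hi =>
      ballCutoff_eq_one (hr i) fun hxi => hx (mem_iUnion₂.2 ⟨i, hi, hxi⟩)

lemma measure_biUnion_ball_two_mul_le (hd : Module.finrank ℝ E = d + 1) {ι : Type*}
    (t : Finset ι) (c : ι → E) {r : ι → ℝ} {R : ℝ} (hr : ∀ i, 0 < r i ∧ r i ≤ R) :
    μ (⋃ i ∈ t, ball (c i) (2 * r i)) ≤
      ENNReal.ofReal R * (2 ^ (d + 1) * μ (ball 0 1) * ∑ i ∈ t, ENNReal.ofReal (r i) ^ d) := by
  refine (measure_biUnion_finset_le t _).trans ?_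
  rw [Finset.mul_sum, Finset.mul_sum]
  gcongr with i
  have hri := hr i
  rw [Measure.addHaar_ball_of_pos μ _ (by linarith), hd, ENNReal.ofReal_pow (by linarith),
    ENNReal.ofReal_mul zero_le_two, ENNReal.ofReal_ofNat]
  calc (2 * ENNReal.ofReal (r i)) ^ (d + 1) * μ (ball 0 1)
      = ENNReal.ofReal (r i) * (2 ^ (d + 1) * μ (ball 0 1) * ENNReal.ofReal (r i) ^ d) := by ring
    _ ≤ _ := by gcongr; exact hri.2

lemma exists_mul_cutoff_superlevel_subset [HasContDiffBump E]
    (hd : Module.finrank ℝ E = d + 1) {a : ℝ} (ha : 0 < a) :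
    ∃ L : ℝ≥0∞, L ≠ ⊤ ∧ ∀ {A : Set E} {u : E → ℝ} {B : ℝ≥0∞}, ContDiff ℝ (⊤ : ℕ∞) u →
      (∀ x, u x ∈ Icc (0 : ℝ) 1) → TranslationLipschitzWith B u μ →
      ∀ {ι : Type} {t : Finset ι} {c : ι → E} {r : ι → ℝ} {R : ℝ}, (∀ i, 0 < r i ∧ r i ≤ R) →
      {x | a ≤ u x} \ A ⊆ ⋃ i ∈ t, ball (c i) (r i) →
      ∃ v : E → ℝ, ContDiff ℝ (⊤ : ℕ∞) v ∧
        TranslationLipschitzWith (B + L * ∑ i ∈ t, ENNReal.ofReal (r i) ^ d) v μ ∧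
        {x | a ≤ v x} ⊆ {x | a ≤ u x} ∩ A ∧
        μ (A \ {x | 1 ≤ v x}) ≤ μ (A \ {x | u x = 1}) +
          ENNReal.ofReal R * (L * ∑ i ∈ t, ENNReal.ofReal (r i) ^ d) := by
  have hω := (measure_ball_lt_top (μ := μ) (x := 0) (r := 1)).ne
  obtain ⟨L, hL, hcutoff⟩ := exists_cutoff_biUnion_ball μ hd
  refine ⟨L + 2 ^ (d + 1) * μ (ball 0 1), by finiteness,
    fun {A u B} hu huI huB ι t c r R hr hcover => ?_⟩
  obtain ⟨w, hw, hwI, hwL, hw₀, hw₁⟩ := hcutoff t c fun i => (hr i).1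
  have hle (x) : u x * w x ≤ u x := mul_le_of_le_one_right (huI x).1 (hwI x).2
  refine ⟨fun x => u x * w x, hu.mul hw,
    (huB.mul hu.continuous.measurable (fun x => ?_) (fun x => ?_) hwL).mono
      (by gcongr; exact le_self_add),
    fun x (hx : a ≤ u x * w x) => ⟨hx.trans (hle x), ?_⟩, ?_⟩
  · exact (Real.norm_of_nonneg (huI x).1).trans_le (huI x).2
  · exact (Real.norm_of_nonneg (hwI x).1).trans_le (hwI x).2
  · by_contra hxA
    rw [hw₀ x (hcover ⟨hx.trans (hle x), hxA⟩), mul_zero] at hx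
    exact hx.not_gt ha
  · have hsub : A \ {x | 1 ≤ u x * w x} ⊆
        A \ {x | u x = 1} ∪ ⋃ i ∈ t, ball (c i) (2 * r i) := fun x ⟨hxA, hx⟩ => by
      by_contra! hxu
      rw [mem_union, not_or] at hxu
      have hux : u x = 1 := by_contra fun hux => hxu.1 ⟨hxA, hux⟩
      exact hx (by rw [mem_ofPred_eq, hux, hw₁ x hxu.2, mul_one])
    refine (measure_mono hsub).trans ((measure_union_le _ _).trans (add_le_add_right ?_ _))
    refine (measure_biUnion_ball_two_mul_le μ hd t c hr).trans ?_
    gcongr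
    exact le_add_self

end Approximation

section SmoothApproximation

variable {d : ℕ} {A : Set (Euc (d + 1))}

lemma inv_three_mul_two_pow_mul_add_le_one (n : ℕ) :
    (3 * 2 ^ n)⁻¹ * 2 ^ n + (3 * 2 ^ n)⁻¹ ≤ (1 : ℝ≥0∞) := by
  have hpow : (2 ^ n + 1 : ℝ≥0∞) ≤ 3 * 2 ^ n := by
    have := one_le_pow₀ (one_le_two (α := ℝ≥0∞)) (n := n)
    calc (2 ^ n + 1 : ℝ≥0∞) ≤ 2 ^ n + 2 * 2 ^ n := by gcongr; exact one_le_mul one_le_two this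
      _ = 3 * 2 ^ n := by ring
  rw [← mul_add_one]
  exact (mul_le_mul_right hpow _).trans (ENNReal.inv_mul_le_one _)

theorem exists_smooth_superlevel_approximation (hA : IsOpen A) (hAt : volume A ≠ ⊤)
    (hK : μH[(d : ℝ)] (frontier A \ extMeas A) ≠ ⊤) :
    ∃ C : ℝ≥0∞, C ≠ ⊤ ∧ ∀ {ε : ℝ≥0∞}, ε ≠ 0 → ∃ v : Euc (d + 1) → ℝ,
      ContDiff ℝ (⊤ : ℕ∞) v ∧ TranslationLipschitzWith C v volume ∧
      Bornology.IsBounded {x | 1 / 3 ≤ v x} ∧ {x | 1 / 3 ≤ v x} ⊆ A ∧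
      volume (A \ {x | 1 ≤ v x}) ≤ ε := by
  have hdim : Module.finrank ℝ (Euc (d + 1)) = d + 1 := finrank_euclideanSpace_fin
  have hθ₀ : ((3 * 2 ^ (d + 1))⁻¹ : ℝ≥0∞) ≠ 0 := ENNReal.inv_ne_zero.2 (by finiteness)
  obtain ⟨T, hT, hcover⟩ := exists_finite_ball_cover_of_density hA hAt hK hθ₀
    (inv_three_mul_two_pow_mul_add_le_one (d + 1))
  obtain ⟨L, hL, hcutoff⟩ := exists_mul_cutoff_superlevel_subset volume hdim
    (show (0 : ℝ) < 1 / 3 by norm_num)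
  have hω := (measure_ball_lt_top (μ := volume) (x := (0 : Euc (d + 1))) (r := 1)).ne
  obtain ⟨B, hB, hAB⟩ : ∃ B ≠ ⊤, TranslationLipschitzWith B (A.indicator (1 : Euc (d + 1) → ℝ))
      volume := ⟨_, by finiteness, translationLipschitzWith_indicator hA hAt⟩
  refine ⟨B + L * T, by finiteness, fun {ε} hε => ?_⟩
  have hε₂ := (ENNReal.half_pos hε).ne'
  obtain ⟨R, hR, hRε⟩ := ENNReal.exists_nnreal_pos_mul_lt
    (show L * T ≠ ⊤ by finiteness) hε₂
  obtain ⟨δ, hδ, hδR, u, hu, huB, huI, hudense, huA⟩ :=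
    exists_smoothing volume hA hAt hAB hε₂ (show (0 : ℝ) < R / 5 by positivity)
  rw [hdim] at hudense
  have hubdd : Bornology.IsBounded {x | 1 / 3 ≤ u x} :=
    (isBounded_setOf_le_measure_inter_ball volume hA.measurableSet hAt hθ₀ hδ).subset hudense
  have hS : IsCompact ({x | 1 / 3 ≤ u x} \ A) := isCompact_of_isClosed_isBounded
    ((isClosed_le continuous_const hu.continuous).sdiff hA) (hubdd.subset sdiff_subset)
  obtain ⟨ι, t, c, r, hr, hSt, hsum⟩ := hcover hδ hS disjoint_sdiff_left fun x hx => hudense x hx.1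
  have hrR i : 0 < r i ∧ r i ≤ R := ⟨(hr i).1, (hr i).2.trans (by linarith)⟩
  obtain ⟨v, hv, hvL, hvA, hvR⟩ := hcutoff hu huI huB hrR hSt
  refine ⟨v, hv, hvL.mono (by gcongr), hubdd.subset (hvA.trans inter_subset_left),
    hvA.trans inter_subset_right, ?_⟩
  calc volume (A \ {x | 1 ≤ v x}) ≤ ε / 2 + R * (L * T) := by
        refine hvR.trans ?_
        rw [ENNReal.ofReal_coe_nnreal]
        gcongr
    _ ≤ ε / 2 + ε / 2 := by gcongr
    _ = ε := ENNReal.add_halves ε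

end SmoothApproximation

theorem exists_isSmoothSet_approximation_of_isOpen {d : ℕ} {A : Set (Euc (d + 1))} (hA : IsOpen A)
    (hAt : volume A ≠ ⊤) (hK : μH[(d : ℝ)] (frontier A \ extMeas A) ≠ ⊤) :
    ∃ M : ℝ≥0∞, M ≠ ⊤ ∧ ∀ {ε : ℝ≥0∞}, ε ≠ 0 → ∃ V, IsSmoothSet V ∧ closure V ⊆ A ∧
      perimeter V univ ≤ M ∧ volume (A \ V) ≤ ε := by
  obtain ⟨C, hC, happrox⟩ := exists_smooth_superlevel_approximation hA hAt hK
  obtain ⟨M, hM, hbetween⟩ := exists_isSmoothSet_between_superlevels (d + 1)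
    (show (1 / 3 : ℝ) < 1 by norm_num) hC
  refine ⟨M, hM, fun hε => ?_⟩
  obtain ⟨v, hv, hvC, hbdd, hvA, hvε⟩ := happrox hε
  obtain ⟨V, hV, hVv, hvV, hVM⟩ := hbetween v hv hvC hbdd
  exact ⟨V, hV, hVv.trans hvA, hVM, (measure_mono (sdiff_subset_sdiff_right hvV)).trans hvε⟩

lemma volume_inter_extMeas {m : ℕ} (A : Set (Euc m)) : volume (A ∩ extMeas A) = 0 := by
  have hdensity := Besicovitch.ae_tendsto_measure_inter_div (volume : Measure (Euc m)) A
  have hext : volume.restrict A (extMeas A) = 0 := measure_mono_null (fun x hx hx₁ =>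
    one_ne_zero (tendsto_nhds_unique (show Tendsto _ _ _ from hx₁) hx)) hdensity
  rw [inter_comm]
  exact le_antisymm ((Measure.le_restrict_apply A (extMeas A)).trans_eq hext) zero_le

lemma volume_sdiff_interior_eq_zero {d : ℕ} {A : Set (Euc (d + 1))}
    (hK : μH[(d : ℝ)] (frontier A \ extMeas A) ≠ ⊤) : volume (A \ interior A) = 0 := by
  refine measure_mono_null (t := (frontier A \ extMeas A) ∪ (A ∩ extMeas A)) ?_
    (measure_union_null
      (measure_eq_zero_of_hausdorffMeasure_ne_top volume finrank_euclideanSpace_fin hK)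
      (volume_inter_extMeas A))
  rintro x ⟨hx, hxi⟩
  by_cases hext : x ∈ extMeas A
  · exact .inr ⟨hx, hext⟩
  · exact .inl ⟨⟨subset_closure hx, hxi⟩, hext⟩

lemma extMeas_congr_ae {m : ℕ} {A B : Set (Euc m)} (h : A =ᵐ[volume] B) :
    extMeas A = extMeas B := by
  have hinter (x : Euc m) (r : ℝ) :
      volume (A ∩ closedBall x r) = volume (B ∩ closedBall x r) :=
    measure_congr (h.inter .rfl)
  simp only [extMeas, hinter]

theorem exists_isSmoothSet_approximation {m : ℕ} {A : Set (Euc m)} (hAt : volume A ≠ ⊤)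
    (hK : μH[(m : ℝ) - 1] (frontier A \ extMeas A) ≠ ⊤) :
    ∃ M : ℝ≥0∞, M ≠ ⊤ ∧ ∀ {ε : ℝ≥0∞}, ε ≠ 0 → ∃ V, IsSmoothSet V ∧ closure V ⊆ A ∧
      perimeter V univ ≤ M ∧ volume (A \ V) ≤ ε := by
  cases m with
  | zero => exact ⟨0, by simp, fun _ => ⟨A, ⟨isOpen_discrete A, A.toFinite.isBounded,
      by simp⟩, (closure_discrete A).subset, by simp [perimeter, pdiv], by simp⟩⟩
  | succ d =>
    rw [Nat.cast_succ, add_sub_cancel_right] at hK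
    have hnull : volume (A \ interior A) = 0 := volume_sdiff_interior_eq_zero hK
    have hae : interior A =ᵐ[volume] A :=
      interior_subset.eventuallyLE.antisymm (ae_le_set.2 hnull)
    obtain ⟨M, hM, happrox⟩ := exists_isSmoothSet_approximation_of_isOpen
      (isOpen_interior (s := A)) (measure_ne_top_of_subset interior_subset hAt) (by
        rw [extMeas_congr_ae hae]
        exact measure_ne_top_of_subset (sdiff_subset_sdiff_left frontier_interior_subset) hK)
    refine ⟨M, hM, fun hε => ?_⟩
    obtain ⟨V, hV, hVA, hVM, hVε⟩ := happrox hε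
    exact ⟨V, hV, hVA.trans interior_subset, hVM,
      (measure_congr (hae.symm.diff .rfl)).trans_le hVε⟩

/-- **Proposition 4.3, second part**: if the non-exterior boundary of a set `A` of finite
positive Lebesgue measure has finite `(m-1)`-dimensional Hausdorff measure, then `A` is
approximated in `L_1(ℝ^m)` by a *sequence* of smooth sets compactly contained in `A` with
uniformly bounded perimeter. -/
theorem approximation_of_finite_nonexterior_boundary {m : ℕ} (A : Set (Euc m))
    (h0 : 0 < volume A) (h1 : volume A < ⊤)
    (hH : (μH[(m : ℝ) - 1] : Measure (Euc m)) (frontier A \ extMeas A) < ⊤) :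
    ∃ V : ℕ → Set (Euc m),
      (∀ n, IsSmoothSet (V n) ∧ closure (V n) ⊆ A ∧ IsCompact (closure (V n))) ∧
      (⨆ n, perimeter (V n) Set.univ) < ⊤ ∧
      Tendsto (fun n => volume ((V n) ∆ A)) atTop (𝓝 0) := by
  obtain ⟨M, hM, happrox⟩ := exists_isSmoothSet_approximation h1.ne hH.ne
  choose V hV hVA hVM hVn using fun n : ℕ =>
    happrox (ENNReal.inv_ne_zero.2 (ENNReal.natCast_ne_top n))
  refine ⟨V, fun n => ⟨hV n, hVA n, (hV n).2.1.isCompact_closure⟩,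
    (iSup_le hVM).trans_lt hM.lt_top, ?_⟩
  refine tendsto_of_tendsto_of_tendsto_of_le_of_le tendsto_const_nhds
    ENNReal.tendsto_inv_nat_nhds_zero (fun _ => zero_le) fun n => ?_
  rw [symmDiff_of_le (subset_closure.trans (hVA n))]
  exact hVn n

end
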